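/- arXiv:math/0608391 — 3 statements merged into one kernel-verified Lean document; each statement's English description precedes it below -/
import Mathlib

section
/- Let k ≥ 1 and let C be a permutation class in which every simple permutation has length at most k. Then every element of the basis of the wreath closure W(C) is a simple permutation of length at most k + 2. -/
/-- A permutation of length `n`. -/
abbrev Perm (n : ℕ) := Equiv.Perm (Fin n)

/-- `σ` is contained in `π`: there is a strictly increasing sequence of indices of `π`
on which `π` is order isomorphic to `σ`. -/
def Contains {m n : ℕ} (σ : Perm m) (π : Perm n) : Prop :=
  ∃ f : Fin m → Fin n, StrictMono f ∧ ∀ s t : Fin m, π (f s) < π (f t) ↔ σ s < σ t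

/-- A permutation class: a downset in the containment order. -/
def IsPermClass (C : ∀ n, Set (Perm n)) : Prop :=
  ∀ ⦃m n : ℕ⦄ (σ : Perm m) (π : Perm n), π ∈ C n → Contains σ π → σ ∈ C m

/-- A set of contiguous values. -/
def IsRange {n : ℕ} (I : Finset (Fin n)) : Prop :=
  ∀ ⦃i j l : Fin n⦄, i ∈ I → l ∈ I → i ≤ j → j ≤ l → j ∈ I

/-- An interval of `π`: a set of contiguous indices mapped to a set of contiguous values. -/
def IsPermInterval {n : ℕ} (π : Perm n) (I : Finset (Fin n)) : Prop :=
  IsRange I ∧ IsRange (I.image π)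

/-- A permutation is simple if its only intervals have size `0`, `1`, or `n`. -/
def IsSimple {n : ℕ} (π : Perm n) : Prop :=
  ∀ I : Finset (Fin n), IsPermInterval π I → I.card ≤ 1 ∨ I.card = n

/-- The wreath closure of `C`: all permutations all of whose simple patterns lie in
`C`.  It is the largest permutation class whose simple permutations are exactly the
simple permutations of `C`. -/
def WreathClosure (C : ∀ n, Set (Perm n)) : ∀ n, Set (Perm n) := fun _ =>
  {π | ∀ (m : ℕ) (σ : Perm m), IsSimple σ → Contains σ π → σ ∈ C m}

/-- `β` is in the basis of `D`: `β ∉ D`, and every permutation strictly contained in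
`β` lies in `D`. -/
def InBasis (D : ∀ n, Set (Perm n)) {n : ℕ} (β : Perm n) : Prop :=
  β ∉ D n ∧ ∀ (m : ℕ) (σ : Perm m), Contains σ β → ¬ Contains β σ → σ ∈ D m

/-!
A permutation `β` minimal outside the wreath closure `W(C)` contains a simple permutation outside
`C`, hence equals it. All simple permutations strictly contained in `β` lie in `C`, so it remains to
see that a nonempty simple permutation of length `n` contains a shorter simple permutation of length
at least `n - 2`.

Only comparisons between indices and between values matter here, so this is a fact about prime
binary structures (Ehrenfeucht–Rozenberg, Schmerl–Trotter). A prime substructure `X` with at least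
three elements, missing at least two elements of a prime structure `S`, extends to a prime
substructure with two more elements: otherwise one exhibits a proper nontrivial module of `S`. A
prime structure with at least three elements has a prime substructure with three or four elements:
otherwise, inserting its elements one at a time, one finds that it is a sum. Hence a maximal proper
prime substructure misses at most two elements.
-/

section BinaryStructures

variable {α β K : Type*} {c : α → α → K} {S X : Finset α}

/-- A function `c : α → α → K` is regarded as a binary structure on `α`, with `c x y` the colour of
the pair `(x, y)`. It is reversible if the colour of `(x, y)` determines that of `(y, x)`. -/
def IsReversible (c : α → α → K) : Prop :=
  ∀ ⦃x y u v⦄, c x y = c u v → c y x = c v u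

/-- `M` is a module of the substructure of `c` induced on `S`: no element of `S` outside `M`
distinguishes two elements of `M`. For the structure of a permutation, these are the intervals. -/
def IsModule (c : α → α → K) (S M : Finset α) : Prop :=
  M ⊆ S ∧ ∀ s ∈ S, s ∉ M → ∀ x ∈ M, ∀ y ∈ M, c s x = c s y

/-- The substructure of `c` induced on `S` is prime: its only modules are `S`, the singletons and
the empty set. For the structure of a permutation, this is simplicity. -/
def IsPrimeOn (c : α → α → K) (S : Finset α) : Prop :=
  ∀ M, IsModule c S M → M.Nontrivial → M = S

/-- `x` does not distinguish any two elements of `X`. -/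
def IsUniformOn (c : α → α → K) (x : α) (X : Finset α) : Prop :=
  ∀ a ∈ X, ∀ b ∈ X, c x a = c x b

/-- `x` and `u` are twins over `X`: no other element of `X` distinguishes them. -/
def IsTwinOn (c : α → α → K) (X : Finset α) (x u : α) : Prop :=
  ∀ s ∈ X, s ≠ x → s ≠ u → c s x = c s u

/-- `S` splits into two nonempty parts `A` and `S \ A` such that all pairs from the first to the
second have the same colour. For the structure of a permutation, this means being a direct or
skew sum. -/
def IsSumOn [DecidableEq α] (c : α → α → K) (S : Finset α) : Prop :=
  ∃ A ⊆ S, A.Nonempty ∧ (S \ A).Nonempty ∧ ∃ p, ∀ a ∈ A, ∀ b ∈ S \ A, c a b = p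

theorem isModule_map {f : β ↪ α} {S M : Finset β} :
    IsModule c (S.map f) (M.map f) ↔ IsModule (fun x y => c (f x) (f y)) S M := by
  simp [IsModule]

theorem isPrimeOn_map {f : β ↪ α} {S : Finset β} :
    IsPrimeOn c (S.map f) ↔ IsPrimeOn (fun x y => c (f x) (f y)) S := by
  refine ⟨fun h M hM hMnt => ?_, fun h M hM hMnt => ?_⟩
  · exact Finset.map_inj.1 (h _ (isModule_map.2 hM) (Finset.map_nontrivial.2 hMnt))
  · obtain ⟨N, -, rfl⟩ := Finset.subset_map_iff.1 hM.1
    rw [h N (isModule_map.1 hM) (Finset.map_nontrivial.1 hMnt)]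

theorem IsModule.mem_of_color_ne {M : Finset α} (hM : IsModule c S M) {s x y : α} (hs : s ∈ S)
    (hne : c s x ≠ c s y) (hx : x ∈ M) (hy : y ∈ M) : s ∈ M := by
  by_contra hsM
  exact hne (hM.2 s hs hsM x hx y hy)

theorem isPrimeOn_of_card_le_two (hS : S.card ≤ 2) : IsPrimeOn c S := fun _ hM hMnt =>
  Finset.eq_of_subset_of_card_le hM.1 (hS.trans (Finset.one_lt_card_iff_nontrivial.2 hMnt))

theorem IsPrimeOn.subset_of_isModule {M : Finset α} (hX : IsPrimeOn c X) (hM : IsModule c S M)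
    (hXS : X ⊆ S) {a b : α} (haX : a ∈ X) (hbX : b ∈ X) (haM : a ∈ M) (hbM : b ∈ M)
    (hab : a ≠ b) : X ⊆ M := by
  classical
  have hinter : IsModule c X (X ∩ M) := by
    refine ⟨Finset.inter_subset_left, fun s hs hsM x hx y hy => ?_⟩
    rw [Finset.mem_inter] at hsM hx hy
    exact hM.2 s (hXS hs) (fun h => hsM ⟨hs, h⟩) x hx.2 y hy.2
  exact Finset.inter_eq_left.1
    (hX _ hinter ⟨a, by simp [haX, haM], b, by simp [hbX, hbM], hab⟩)

theorem IsPrimeOn.disjoint_or_singleton_or_subset {M : Finset α} (hX : IsPrimeOn c X)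
    (hM : IsModule c S M) (hXS : X ⊆ S) :
    (∀ a ∈ X, a ∉ M) ∨ (∃ z ∈ X, ∀ a ∈ X, a ∈ M ↔ a = z) ∨ X ⊆ M := by
  by_contra! h
  obtain ⟨⟨a, haX, haM⟩, hne, hsub⟩ := h
  obtain ⟨b, hbX, hb⟩ := hne a haX
  exact hsub (hX.subset_of_isModule hM hXS haX hbX haM (by grind) (by grind))

theorem IsPrimeOn.exists_color_ne (hX : IsPrimeOn c X) (h3 : 3 ≤ X.card) {z : α} (hz : z ∈ X) :
    ∃ a ∈ X, ∃ b ∈ X, a ≠ z ∧ b ≠ z ∧ c z a ≠ c z b := by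
  classical
  by_contra! h
  have hM : IsModule c X (X.erase z) := by
    refine ⟨Finset.erase_subset z X, fun s hs hsz x hx y hy => ?_⟩
    obtain rfl : s = z := by grind
    rw [Finset.mem_erase] at hx hy
    exact h x hx.2 y hy.2 hx.1 hy.1
  have hcard := Finset.card_erase_of_mem hz
  rw [hX _ hM (Finset.one_lt_card_iff_nontrivial.1 (by omega))] at hcard
  omega

theorem IsPrimeOn.not_isTwinOn (hX : IsPrimeOn c X) (h3 : 3 ≤ X.card) {x u : α} (hx : x ∈ X)
    (hu : u ∈ X) (hxu : x ≠ u) : ¬ IsTwinOn c X x u := by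
  classical
  intro h
  have hM : IsModule c X {x, u} := ⟨by grind, by grind [IsTwinOn]⟩
  have hcard := Finset.card_pair hxu
  rw [hX _ hM (Finset.one_lt_card_iff_nontrivial.1 (by omega))] at hcard
  omega

theorem IsPrimeOn.not_isUniformOn_of_isTwinOn (hc : IsReversible c) (hX : IsPrimeOn c X)
    (h3 : 3 ≤ X.card) {x u : α} (hx : x ∉ X) (hu : u ∈ X) (hxu : IsTwinOn c X x u) :
    ¬ IsUniformOn c x X := by
  intro hunif
  have hxu' : ∀ s ∈ X, s ≠ u → c x s = c u s := fun s hs hsu => hc (hxu s hs (by grind) hsu)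
  obtain ⟨a, ha, b, hb, hau, hbu, hab⟩ := hX.exists_color_ne h3 hu
  exact hab (by rw [← hxu' a ha hau, ← hxu' b hb hbu, hunif a ha b hb])

theorem IsPrimeOn.eq_of_isTwinOn (hX : IsPrimeOn c X) (h3 : 3 ≤ X.card) {x u z : α} (hx : x ∉ X)
    (hu : u ∈ X) (hz : z ∈ X) (hxu : IsTwinOn c X x u) (hxz : IsTwinOn c X x z) : z = u := by
  by_contra hne
  exact hX.not_isTwinOn h3 hz hu hne fun s hs hsz hsu =>
    (hxz s hs (by grind) hsz).symm.trans (hxu s hs (by grind) hsu)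

section DecidableEq

variable [DecidableEq α]

theorem IsPrimeOn.isPrimeOn_insert (hX : IsPrimeOn c X) {x : α}
    (hunif : ¬ IsUniformOn c x X) (htwin : ∀ u ∈ X, ¬ IsTwinOn c X x u) :
    IsPrimeOn c (insert x X) := by
  intro M hM hMnt
  obtain ⟨p, hp, q, hq, hpq⟩ := hMnt
  have hMS := hM.1
  by_contra hne
  rcases hX.disjoint_or_singleton_or_subset hM (Finset.subset_insert x X) with
    h | ⟨z, hz, h⟩ | h
  · grind
  · have hxM : x ∈ M := by grind
    exact htwin z hz fun s hs _ hsz => hM.2 s (by grind) (by grind) x hxM z (by grind)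
  · have hxM : x ∉ M := fun hxM => hne (hMS.antisymm (by grind))
    exact hunif fun a ha b hb => hM.2 x (by grind) hxM a (h ha) b (h hb)

theorem IsPrimeOn.isPrimeOn_insert_insert_of_isUniformOn (hc : IsReversible c)
    (hX : IsPrimeOn c X) (h3 : 3 ≤ X.card) {x y a : α} (ha : a ∈ X)
    (hxX : IsUniformOn c x X) (hyX : ¬ IsUniformOn c y X) (hxy : c x a ≠ c x y) :
    IsPrimeOn c (insert x (insert y X)) := by
  rintro M hM ⟨p, hp, q, hq, hpq⟩
  have hMS := hM.1
  by_contra hne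
  rcases hX.disjoint_or_singleton_or_subset hM (by grind) with h | ⟨z, hz, h⟩ | h
  · have hxM : x ∈ M := by grind
    have hyM : y ∈ M := by grind
    have hyx : ∀ s ∈ X, c x s = c y s := fun s hs => hc (hM.2 s (by grind) (h s hs) x hxM y hyM)
    exact hyX fun s hs t ht => by rw [← hyx s hs, ← hyx t ht, hxX s hs t ht]
  · by_cases hxM : x ∈ M
    · have hzx : ∀ s ∈ X, s ≠ z → c x s = c z s := fun s hs hsz =>
        hc (hM.2 s (by grind) (by grind) x hxM z (by grind))
      obtain ⟨s, hs, t, ht, hsz, htz, hst⟩ := hX.exists_color_ne h3 hz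
      exact hst (by rw [← hzx s hs hsz, ← hzx t ht htz, hxX s hs t ht])
    · exact hxy ((hxX a ha z hz).trans (hM.2 x (by grind) hxM z (by grind) y (by grind)))
  · by_cases hyM : y ∈ M
    · have hxM : x ∉ M := fun hxM => hne (hMS.antisymm (by grind))
      exact hxy (hM.2 x (by grind) hxM a (h ha) y hyM)
    · exact hyX fun s hs t ht => hM.2 y (by grind) hyM s (h hs) t (h ht)

theorem IsPrimeOn.isPrimeOn_insert_insert_of_isTwinOn (hc : IsReversible c) (hX : IsPrimeOn c X)
    (h3 : 3 ≤ X.card) {u x y : α} (hu : u ∈ X) (hx : x ∉ X)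
    (hxu : IsTwinOn c X x u) (hyu : ¬ IsTwinOn c X y u) (hyx : c y x ≠ c y u) :
    IsPrimeOn c (insert x (insert y X)) := by
  rintro M hM ⟨p, hp, q, hq, hpq⟩
  have hMS := hM.1
  by_contra hne
  rcases hX.disjoint_or_singleton_or_subset hM (by grind) with h | ⟨z, hz, h⟩ | h
  · exact hyu fun s hs _ hsu => (hM.2 s (by grind) (h s hs) y (by grind) x (by grind)).trans
      (hxu s hs (by grind) hsu)
  · have hzM : z ∈ M := by grind
    have htwin : ∀ t ∈ M, IsTwinOn c X t z := fun t ht s hs _ hsz =>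
      hM.2 s (by grind) (by grind) t ht z hzM
    by_cases hxM : x ∈ M
    · obtain rfl := hX.eq_of_isTwinOn h3 hx hu hz hxu (htwin x hxM)
      have hyM : y ∉ M := fun hyM => hyu (htwin y hyM)
      exact hyx (hM.2 y (by grind) hyM x hxM z hzM)
    · have hyM : y ∈ M := by grind
      have hzu : z ≠ u := by rintro rfl; exact hyu (htwin y hyM)
      have hx_yz : c x y = c x z := hM.2 x (by grind) hxM y hyM z hzM
      have hu_yz : c u y = c u z := hM.2 u (by grind) (by grind) y hyM z hzM
      have hz_xu : c z x = c z u := hxu z hz (by grind) hzu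
      exact hyx (hc (hx_yz.trans ((hc hz_xu).trans hu_yz.symm)))
  · by_cases hxM : x ∈ M
    · have hyM : y ∉ M := fun hyM => hne (hMS.antisymm (by grind))
      exact hyx (hM.2 y (by grind) hyM x hxM u (h hu))
    · exact hX.not_isUniformOn_of_isTwinOn hc h3 hx hu hxu fun a ha b hb =>
        hM.2 x (by grind) hxM a (h ha) b (h hb)

theorem isPrimeOn_insert_insert_of_isPrimeOn_insert {x y s : α} (h2 : 2 ≤ X.card)
    (hx : IsPrimeOn c (insert x X)) (hy : IsPrimeOn c (insert y X)) (hs : s ∈ X)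
    (hsxy : c s x ≠ c s y) : IsPrimeOn c (insert x (insert y X)) := by
  rintro M hM ⟨p, hp, q, hq, hpq⟩
  have hMS := hM.1
  have hfull : X ⊆ M → M = insert x (insert y X) := by
    intro hXM
    obtain ⟨a, ha, b, hb, hab⟩ := Finset.one_lt_card.1 h2
    have hxM := hx.subset_of_isModule hM (by grind) (by grind) (by grind) (hXM ha) (hXM hb) hab
    have hyM := hy.subset_of_isModule hM (by grind) (by grind) (by grind) (hXM ha) (hXM hb) hab
    exact hMS.antisymm (by grind)
  by_contra hne
  have hdisj : ∀ a ∈ X, a ∉ M := by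
    intro a ha haM
    obtain ⟨b, hbM, hab⟩ : ∃ b ∈ M, a ≠ b := by
      by_cases hap : a = p
      · exact ⟨q, hq, hap ▸ hpq⟩
      · exact ⟨p, hp, hap⟩
    have hb : b ∈ insert x X ∨ b ∈ insert y X := by grind
    refine hne (hfull ?_)
    rcases hb with hb | hb
    · have := hx.subset_of_isModule hM (by grind) (by grind) hb haM hbM hab
      grind
    · have := hy.subset_of_isModule hM (by grind) (by grind) hb haM hbM hab
      grind
  exact hsxy (hM.2 s (by grind) (hdisj s hs) x (by grind) y (by grind))

theorem isPrimeOn_triple {x y z : α} (hx : c x y ≠ c x z) (hy : c y x ≠ c y z)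
    (hz : c z x ≠ c z y) : IsPrimeOn c {x, y, z} := by
  rintro M hM ⟨p, hp, q, hq, hpq⟩
  have hMS := hM.1
  have hx' : y ∈ M → z ∈ M → x ∈ M := hM.mem_of_color_ne (by simp) hx
  have hy' : x ∈ M → z ∈ M → y ∈ M := hM.mem_of_color_ne (by simp) hy
  have hz' : x ∈ M → y ∈ M → z ∈ M := hM.mem_of_color_ne (by simp) hz
  exact hMS.antisymm (by grind)

-- `a`, `b`, `v`, `w` play the role of an induced path: at each vertex, edges and non-edges differ.
theorem isPrimeOn_path {a b v w : α} (hav : c a b ≠ c a v) (haw : c a b ≠ c a w)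
    (hbw : c b w ≠ c b a) (hbv : c b w ≠ c b v) (hvb : c v a ≠ c v b) (hwa : c w v ≠ c w a) :
    IsPrimeOn c {a, b, v, w} := by
  rintro M hM ⟨p, hp, q, hq, hpq⟩
  have hMS := hM.1
  have ha₁ : b ∈ M → v ∈ M → a ∈ M := hM.mem_of_color_ne (by simp) hav
  have ha₂ : b ∈ M → w ∈ M → a ∈ M := hM.mem_of_color_ne (by simp) haw
  have hb₁ : w ∈ M → a ∈ M → b ∈ M := hM.mem_of_color_ne (by simp) hbw
  have hb₂ : w ∈ M → v ∈ M → b ∈ M := hM.mem_of_color_ne (by simp) hbv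
  have hv' : a ∈ M → b ∈ M → v ∈ M := hM.mem_of_color_ne (by simp) hvb
  have hw' : v ∈ M → a ∈ M → w ∈ M := hM.mem_of_color_ne (by simp) hwa
  exact hMS.antisymm (by grind (splits := 20))

theorem color_eq_of_not_isPrimeOn (hc : IsReversible c) {a a' b x : α}
    (hax : c a x = c a b) (ha'b : c a' b = c a b) (ha'x : c a' x ≠ c a b) (hxb : c x b ≠ c a b)
    (h₃ : ¬ IsPrimeOn c {a, a', x}) (h₄ : ¬ IsPrimeOn c {a, a', x, b}) : c a a' = c a b := by
  -- Otherwise `a`, `a'`, `x`, `b` is a path whose non-edges are the pairs coloured like `(a, b)`.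
  by_contra haa'
  have hbx : c b x ≠ c b a := fun h => hxb (hc h)
  have hxa : c x a ≠ c x a' := fun h => ha'x ((hc h).symm.trans hax)
  have ha'a : c a' a = c a' x := by
    by_contra h
    exact h₃ (isPrimeOn_triple (by grind) h hxa)
  exact h₄ (isPrimeOn_path (by grind) haa' (by grind) (by grind) hxa hbx)

theorem isSumOn_insert_of_exists (hc : IsReversible c) {A : Finset α} {x a b : α} {p : K}
    (hS : ∀ T ⊆ insert x S, IsPrimeOn c T → T.card ≠ 3 ∧ T.card ≠ 4)
    (hAS : A ⊆ S) (hA : ∀ a ∈ A, ∀ b ∈ S \ A, c a b = p) (hx : x ∉ S)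
    (ha : a ∈ A) (hax : c a x = p) (hb : b ∈ S \ A) (hxb : c x b ≠ p) :
    IsSumOn c (insert x S) := by
  classical
  have hsplit : ∀ a ∈ A, c a x = p → ∀ a' ∈ A, c a' x ≠ p → c a a' = p := by
    intro a ha hax a' ha' ha'x
    have hab := hA a ha b hb
    have ha'b := hA a' ha' b hb
    have h₃ : ({a, a', x} : Finset α).card = 3 := by grind
    have h₄ : ({a, a', x, b} : Finset α).card = 4 := by grind
    rw [← hab]
    exact color_eq_of_not_isPrimeOn hc (by grind) (by grind) (by grind) (by grind)
      (fun h => (hS _ (by grind) h).1 h₃) (fun h => (hS _ (by grind) h).2 h₄)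
  refine ⟨A.filter fun a => c a x = p, by grind, ⟨a, by grind⟩, ⟨x, by grind⟩, p, ?_⟩
  grind

theorem isSumOn_insert (hc : IsReversible c) {x : α}
    (hS : ∀ T ⊆ insert x S, IsPrimeOn c T → T.card ≠ 3 ∧ T.card ≠ 4)
    (hx : x ∉ S) (h : IsSumOn c S) : IsSumOn c (insert x S) := by
  obtain ⟨A, hAS, ⟨a₀, ha₀⟩, ⟨b₀, hb₀⟩, p, hA⟩ := h
  have hB : ∀ b ∈ S \ A, ∀ a ∈ S \ (S \ A), c b a = c b₀ a₀ := fun b hb a ha =>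
    hc ((hA a (by grind) b hb).trans (hA a₀ ha₀ b₀ hb₀).symm)
  by_cases hAx : ∀ a ∈ A, c a x = p
  · exact ⟨A, by grind, ⟨a₀, ha₀⟩, ⟨x, by grind⟩, p, by grind⟩
  by_cases hBx : ∀ b ∈ S \ A, c b x = c b₀ a₀
  · exact ⟨S \ A, by grind, ⟨b₀, hb₀⟩, ⟨x, by grind⟩, c b₀ a₀, by grind⟩
  push Not at hAx hBx
  obtain ⟨a₁, ha₁, ha₁x⟩ := hAx
  obtain ⟨b₁, hb₁, hb₁x⟩ := hBx
  by_cases hAp : ∃ a ∈ A, c a x = p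
  · obtain ⟨a, ha, hax⟩ := hAp
    refine isSumOn_insert_of_exists hc hS hAS hA hx ha hax hb₁ fun h => hb₁x ?_
    exact hc (h.trans (hA a₀ ha₀ b₀ hb₀).symm)
  by_cases hBp : ∃ b ∈ S \ A, c b x = c b₀ a₀
  · obtain ⟨b, hb, hbx⟩ := hBp
    refine isSumOn_insert_of_exists hc hS Finset.sdiff_subset hB hx hb hbx
      (by grind : a₁ ∈ S \ (S \ A)) fun h => ha₁x ?_
    exact (hc h).trans (hA a₀ ha₀ b₀ hb₀)
  push Not at hAp hBp
  have hxAB : ∀ a ∈ A, ∀ b ∈ S \ A, c x a = c x b := by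
    intro a ha b hb
    have hab := hA a ha b hb
    have hba := hB b hb a (by grind)
    by_contra hne
    have h₃ : ({x, a, b} : Finset α).card = 3 := by grind
    exact (hS _ (by grind) (isPrimeOn_triple hne (by grind) (by grind))).1 h₃
  exact ⟨{x}, by grind, ⟨x, by grind⟩, ⟨a₀, by grind⟩, c x a₀, by grind⟩

theorem isSumOn_of_forall_isPrimeOn_card_ne (hc : IsReversible c) (h2 : 2 ≤ S.card)
    (hS : ∀ T ⊆ S, IsPrimeOn c T → T.card ≠ 3 ∧ T.card ≠ 4) : IsSumOn c S := by
  induction S using Finset.induction_on with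
  | empty => simp at h2
  | insert x S hx ih =>
    rw [Finset.card_insert_of_notMem hx] at h2
    rcases (Nat.le_of_succ_le_succ h2).eq_or_lt with h1 | h1
    · obtain ⟨y, rfl⟩ := Finset.card_eq_one.1 h1.symm
      exact ⟨{x}, by grind, ⟨x, by grind⟩, ⟨y, by grind⟩, c x y, by grind⟩
    · exact isSumOn_insert hc hS hx (ih h1 fun T hT => hS T (by grind))

theorem IsSumOn.not_isPrimeOn (hc : IsReversible c) (h3 : 3 ≤ S.card) (h : IsSumOn c S) :
    ¬ IsPrimeOn c S := by
  obtain ⟨A, hAS, ⟨a, ha⟩, ⟨b, hb⟩, p, hA⟩ := h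
  intro hS
  have hAmod : IsModule c S A := by
    refine ⟨hAS, fun s hs hsA x hx y hy => hc ?_⟩
    grind
  have hBmod : IsModule c S (S \ A) := by
    refine ⟨Finset.sdiff_subset, fun s hs hsA x hx y hy => ?_⟩
    grind
  have hcard := Finset.card_sdiff_add_card_eq_card hAS
  rcases (by omega : 1 < A.card ∨ 1 < (S \ A).card) with h | h
  · have := hS A hAmod (Finset.one_lt_card_iff_nontrivial.1 h)
    grind
  · have := hS _ hBmod (Finset.one_lt_card_iff_nontrivial.1 h)
    grind

theorem IsPrimeOn.exists_isPrimeOn_insert_insert_of_isTwinOn (hc : IsReversible c)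
    (hS : IsPrimeOn c S) (hX : IsPrimeOn c X) (h3 : 3 ≤ X.card) (hXS : X ⊆ S) {x u : α}
    (hxS : x ∈ S) (hxX : x ∉ X) (hu : u ∈ X) (hxu : IsTwinOn c X x u) :
    ∃ x ∈ S \ X, ∃ y ∈ S \ X, x ≠ y ∧ IsPrimeOn c (insert x (insert y X)) := by
  classical
  by_contra! hcon
  -- In the absence of a prime extension, `u` and its twins outside `X` form a module of `S`.
  let M := S.filter fun z => z = u ∨ z ∉ X ∧ IsTwinOn c X z u
  have hcu : ∀ s ∈ S, s ∉ M → ∀ z ∈ M, c s z = c s u := by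
    intro s hs hsM z hz
    by_cases hzu : z = u
    · rw [hzu]
    have hz' : z ∉ X ∧ IsTwinOn c X z u := by grind
    by_cases hsX : s ∈ X
    · exact hz'.2 s hsX (by grind) (by grind)
    · by_contra hne
      exact hcon z (by grind) s (by grind) (by grind)
        (hX.isPrimeOn_insert_insert_of_isTwinOn hc h3 hu hz'.1 hz'.2 (by grind) hne)
  have hM : IsModule c S M := ⟨S.filter_subset _, fun s hs hsM y hy z hz =>
    (hcu s hs hsM y hy).trans (hcu s hs hsM z hz).symm⟩
  have hMS := hS M hM ⟨x, by grind, u, by grind, by grind⟩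
  obtain ⟨a, ha, hau⟩ := Finset.exists_mem_ne (by omega : 1 < X.card) u
  grind

theorem IsPrimeOn.exists_isPrimeOn_insert_insert_of_isUniformOn (hc : IsReversible c)
    (hS : IsPrimeOn c S) (hX : IsPrimeOn c X) (h3 : 3 ≤ X.card) (hXS : X ⊆ S) {x : α}
    (hxS : x ∈ S) (hxX : x ∉ X) (hunif : IsUniformOn c x X) :
    ∃ x ∈ S \ X, ∃ y ∈ S \ X, x ≠ y ∧ IsPrimeOn c (insert x (insert y X)) := by
  classical
  by_contra! hcon
  obtain ⟨a, ha⟩ : X.Nonempty := Finset.card_pos.1 (by omega)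
  -- In the absence of a prime extension, the elements of `S` outside `X` that are uniform on `X`
  -- are uniform on their complement.
  let M := S.filter fun z => z ∈ X ∨ ¬ IsUniformOn c z X
  have hca : ∀ s ∈ S, s ∉ M → ∀ z ∈ M, c s a = c s z := by
    intro s hs hsM z hz
    have hsX : s ∉ X ∧ IsUniformOn c s X := by grind
    by_cases hzX : z ∈ X
    · exact hsX.2 a ha z hzX
    · by_contra hne
      exact hcon s (by grind) z (by grind) (by grind)
        (hX.isPrimeOn_insert_insert_of_isUniformOn hc h3 ha hsX.2 (by grind) hne)
  have hM : IsModule c S M := ⟨S.filter_subset _, fun s hs hsM y hy z hz =>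
    (hca s hs hsM y hy).symm.trans (hca s hs hsM z hz)⟩
  have hXM : X ⊆ M := by grind
  have hMS := hS M hM ((Finset.one_lt_card_iff_nontrivial.1 (by omega)).mono hXM)
  grind

theorem IsPrimeOn.exists_isPrimeOn_insert_insert (hc : IsReversible c) (hS : IsPrimeOn c S)
    (hX : IsPrimeOn c X) (h3 : 3 ≤ X.card) (hXS : X ⊆ S) (hcard : X.card + 2 ≤ S.card) :
    ∃ x ∈ S \ X, ∃ y ∈ S \ X, x ≠ y ∧ IsPrimeOn c (insert x (insert y X)) := by
  by_cases htwin : ∃ x ∈ S \ X, ∃ u ∈ X, IsTwinOn c X x u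
  · obtain ⟨x, hx, u, hu, hxu⟩ := htwin
    rw [Finset.mem_sdiff] at hx
    exact hS.exists_isPrimeOn_insert_insert_of_isTwinOn hc hX h3 hXS hx.1 hx.2 hu hxu
  by_cases hunif : ∃ x ∈ S \ X, IsUniformOn c x X
  · obtain ⟨x, hx, hxX⟩ := hunif
    rw [Finset.mem_sdiff] at hx
    exact hS.exists_isPrimeOn_insert_insert_of_isUniformOn hc hX h3 hXS hx.1 hx.2 hxX
  push Not at htwin hunif
  have hinsert : ∀ x ∈ S \ X, IsPrimeOn c (insert x X) := fun x hx =>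
    hX.isPrimeOn_insert (hunif x hx) (htwin x hx)
  by_contra! hcon
  have hM : IsModule c S (S \ X) := by
    refine ⟨Finset.sdiff_subset, fun s hs hsM x hx y hy => ?_⟩
    by_contra hne
    exact hcon x hx y hy (by grind) (isPrimeOn_insert_insert_of_isPrimeOn_insert (by omega)
      (hinsert x hx) (hinsert y hy) (by grind) hne)
  have hcard' := Finset.card_sdiff_add_card_eq_card hXS
  have hMS := hS _ hM (Finset.one_lt_card_iff_nontrivial.1 (by omega))
  rw [hMS] at hcard'
  omega

end DecidableEq

theorem IsPrimeOn.exists_subset_card_eq_three_or_four (hc : IsReversible c) (hS : IsPrimeOn c S)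
    (h3 : 3 ≤ S.card) : ∃ T ⊆ S, IsPrimeOn c T ∧ (T.card = 3 ∨ T.card = 4) := by
  classical
  by_contra! hcon
  exact (isSumOn_of_forall_isPrimeOn_card_ne hc (by omega) hcon).not_isPrimeOn hc h3 hS

theorem IsPrimeOn.card_le_card_add_two_of_maximal (hc : IsReversible c) (hS : IsPrimeOn c S)
    (h3 : 3 ≤ X.card) (hX : Maximal (fun T => T ⊂ S ∧ IsPrimeOn c T) X) :
    S.card ≤ X.card + 2 := by
  classical
  by_contra! hlt
  have hXS : X ⊆ S := hX.prop.1.subset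
  obtain ⟨x, hx, y, hy, hxy, hprime⟩ :=
    hS.exists_isPrimeOn_insert_insert hc hX.prop.2 h3 hXS hlt.le
  have hcard : (insert x (insert y X)).card = X.card + 2 := by grind
  have hsub : insert x (insert y X) ⊂ S :=
    Finset.ssubset_iff_subset_ne.2 ⟨by grind, fun h => hlt.ne' (h ▸ hcard)⟩
  have hXsub : X ⊆ insert x (insert y X) := by grind
  have hle := Finset.card_le_card (hX.le_of_ge ⟨hsub, hprime⟩ hXsub)
  omega

theorem IsPrimeOn.exists_ssubset_card_le_card_add_two (hc : IsReversible c) (hS : IsPrimeOn c S)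
    (hne : S.Nonempty) : ∃ T ⊂ S, IsPrimeOn c T ∧ S.card ≤ T.card + 2 := by
  classical
  have hpos := hne.card_pos
  rcases le_or_gt S.card 4 with h4 | h4
  · obtain ⟨T, hTS, hT⟩ := Finset.exists_subset_card_eq (by omega : min 2 (S.card - 1) ≤ S.card)
    exact ⟨T, hTS.ssubset_of_ne (by grind), isPrimeOn_of_card_le_two (by omega), by omega⟩
  · obtain ⟨T, hTS, hT, hTcard⟩ := hS.exists_subset_card_eq_three_or_four hc (by omega)
    have hTmem : T ∈ S.ssubsets.filter (IsPrimeOn c) :=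
      Finset.mem_filter.2 ⟨Finset.mem_ssubsets.2 (hTS.ssubset_of_ne (by grind)), hT⟩
    obtain ⟨X, hTX, hX⟩ := Finset.exists_le_maximal _ hTmem
    simp only [Finset.mem_filter, Finset.mem_ssubsets] at hX
    have hcard := Finset.card_le_card hTX
    exact ⟨X, hX.prop.1, hX.prop.2, hS.card_le_card_add_two_of_maximal hc (by omega) hX⟩

end BinaryStructures

section Permutations

variable {m n : ℕ} {σ : Perm m} {π : Perm n}

/-- A permutation as a binary structure on its indices: the colour of `(s, t)` records how the
indices `s`, `t` and how their values compare. -/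
def permStructure (π : Perm n) (s t : Fin n) : Ordering × Ordering :=
  (cmp s t, cmp (π s) (π t))

theorem permStructure_eq_iff {s t : Fin m} {s' t' : Fin n} :
    permStructure σ s t = permStructure π s' t' ↔
      cmp s t = cmp s' t' ∧ cmp (σ s) (σ t) = cmp (π s') (π t') :=
  Prod.ext_iff

theorem isReversible_permStructure : IsReversible (permStructure π) := fun _ _ _ _ h =>
  permStructure_eq_iff.2 ((permStructure_eq_iff.1 h).imp cmp_eq_cmp_symm.1 cmp_eq_cmp_symm.1)

theorem isRange_iff_cmp_eq {I : Finset (Fin n)} :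
    IsRange I ↔ ∀ s ∉ I, ∀ x ∈ I, ∀ y ∈ I, cmp s x = cmp s y := by
  refine ⟨fun h s hs x hx y hy => ?_, fun h i j l hi hl hij hjl => ?_⟩
  · rcases lt_trichotomy s x with hsx | rfl | hxs
    · rw [hsx.cmp_eq_lt, LT.lt.cmp_eq_lt (not_le.1 fun hys => hs (h hy hx hys hsx.le))]
    · exact absurd hx hs
    · rw [hxs.cmp_eq_gt, LT.lt.cmp_eq_gt (not_le.1 fun hsy => hs (h hx hy hxs.le hsy))]
  · by_contra hj
    have hji : j ≤ i := (le_iff_le_of_cmp_eq_cmp (h j hj l hl i hi)).1 hjl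
    exact hj (hij.antisymm hji ▸ hi)

theorem isPermInterval_iff_isModule {I : Finset (Fin n)} :
    IsPermInterval π I ↔ IsModule (permStructure π) Finset.univ I := by
  have himage : IsRange (I.image π) ↔
      ∀ s ∉ I, ∀ x ∈ I, ∀ y ∈ I, cmp (π s) (π x) = cmp (π s) (π y) := by
    rw [isRange_iff_cmp_eq, π.surjective.forall]
    simp only [π.injective.mem_finset_image, Finset.forall_mem_image]
  rw [IsPermInterval, isRange_iff_cmp_eq, himage]
  simp only [IsModule, permStructure_eq_iff, Finset.subset_univ, Finset.mem_univ, true_and,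
    forall_const, forall_and]

theorem isSimple_iff_isPrimeOn : IsSimple π ↔ IsPrimeOn (permStructure π) Finset.univ := by
  simp only [IsSimple, IsPrimeOn, isPermInterval_iff_isModule]
  refine forall₂_congr fun M _ => ?_
  rw [← Finset.one_lt_card_iff_nontrivial, ← Finset.card_eq_iff_eq_univ, Fintype.card_fin,
    ← not_le, or_iff_not_imp_left]

theorem contains_iff_exists_permStructure :
    Contains σ π ↔ ∃ f : Fin m ↪o Fin n, ∀ s t,
      permStructure σ s t = permStructure π (f s) (f t) := by
  refine ⟨fun ⟨f, hf, h⟩ => ⟨OrderEmbedding.ofStrictMono f hf, fun s t => ?_⟩,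
    fun ⟨f, h⟩ => ⟨f, f.strictMono, fun s t => ?_⟩⟩
  · rw [permStructure_eq_iff, OrderEmbedding.coe_ofStrictMono, hf.cmp_map_eq]
    refine ⟨rfl, ?_⟩
    rcases lt_trichotomy (σ s) (σ t) with hst | hst | hst
    · rw [hst.cmp_eq_lt, ((h s t).2 hst).cmp_eq_lt]
    · rw [σ.injective hst, cmp_self_eq_eq, cmp_self_eq_eq]
    · rw [hst.cmp_eq_gt, ((h t s).2 hst).cmp_eq_gt]
  · exact (lt_iff_lt_of_cmp_eq_cmp (permStructure_eq_iff.1 (h s t)).2).symm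

theorem Contains.le (h : Contains σ π) : m ≤ n := by
  obtain ⟨f, hf, -⟩ := h
  simpa using Fintype.card_le_of_injective f hf.injective

theorem Contains.refl (π : Perm n) : Contains π π :=
  ⟨id, strictMono_id, fun _ _ => Iff.rfl⟩

theorem Contains.isSimple (h : Contains σ π) (hnm : n ≤ m) (hσ : IsSimple σ) : IsSimple π := by
  obtain rfl := h.le.antisymm hnm
  obtain ⟨f, hf⟩ := contains_iff_exists_permStructure.1 h
  have huniv : Finset.univ.map f.toEmbedding = Finset.univ :=
    Finset.map_univ_of_surjective (Finite.surjective_of_injective f.injective)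
  rw [isSimple_iff_isPrimeOn, funext₂ hf] at hσ
  rw [isSimple_iff_isPrimeOn, ← huniv]
  exact isPrimeOn_map.2 hσ

theorem IsPrimeOn.exists_isSimple_contains {X : Finset (Fin n)}
    (hX : IsPrimeOn (permStructure π) X) :
    ∃ σ : Perm X.card, IsSimple σ ∧ Contains σ π := by
  let f : Fin X.card ↪o Fin n := X.orderEmbOfFin rfl
  let τ : Perm X.card := Tuple.sort (π ∘ f)
  have hτ : StrictMono ((π ∘ f) ∘ τ) := (Tuple.monotone_sort (π ∘ f)).strictMono_of_injective
    ((π.injective.comp f.injective).comp τ.injective)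
  have hf : ∀ s t, permStructure τ⁻¹ s t = permStructure π (f s) (f t) := fun s t => by
    simpa [permStructure_eq_iff, f.strictMono.cmp_map_eq] using
      (hτ.cmp_map_eq (τ⁻¹ s) (τ⁻¹ t)).symm
  refine ⟨τ⁻¹, ?_, contains_iff_exists_permStructure.2 ⟨f, hf⟩⟩
  rw [isSimple_iff_isPrimeOn, funext₂ hf]
  refine isPrimeOn_map (f := f.toEmbedding).1 ?_
  rwa [Finset.map_orderEmbOfFin_univ]

theorem IsSimple.exists_contains (hπ : IsSimple π) (hn : 0 < n) :
    ∃ (m : ℕ) (σ : Perm m), IsSimple σ ∧ Contains σ π ∧ m < n ∧ n ≤ m + 2 := by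
  have : NeZero n := ⟨hn.ne'⟩
  obtain ⟨X, hX, hXprime, hcard⟩ :=
    (isSimple_iff_isPrimeOn.1 hπ).exists_ssubset_card_le_card_add_two
      isReversible_permStructure Finset.univ_nonempty
  obtain ⟨σ, hσ, hσπ⟩ := hXprime.exists_isSimple_contains
  have hlt := Finset.card_lt_card hX
  rw [Finset.card_univ, Fintype.card_fin] at hcard hlt
  exact ⟨X.card, σ, hσ, hσπ, hlt, hcard⟩

variable {C : ∀ n, Set (Perm n)} {β : Perm n}

theorem InBasis.mem_of_isSimple (hβ : InBasis (WreathClosure C) β) (hσ : IsSimple σ)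
    (hσβ : Contains σ β) (hβσ : ¬ Contains β σ) : σ ∈ C m :=
  hβ.2 m σ hσβ hβσ m σ hσ (Contains.refl σ)

theorem InBasis.isSimple (hβ : InBasis (WreathClosure C) β) : IsSimple β := by
  obtain ⟨m, σ, hσ, hσβ, hσC⟩ : ∃ (m : ℕ) (σ : Perm m), IsSimple σ ∧ Contains σ β ∧ σ ∉ C m := by
    simpa [WreathClosure] using hβ.1
  have hβσ : Contains β σ := by
    by_contra hβσ
    exact hσC (hβ.mem_of_isSimple hσ hσβ hβσ)
  exact hσβ.isSimple hβσ.le hσ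

end Permutations

theorem statement11_general (k : ℕ) (C : ∀ n, Set (Perm n))
    (hsimple : ∀ (n : ℕ) (π : Perm n), π ∈ C n → IsSimple π → n ≤ k) (n : ℕ) (β : Perm n)
    (hβ : InBasis (WreathClosure C) β) : IsSimple β ∧ n ≤ k + 2 := by
  refine ⟨hβ.isSimple, ?_⟩
  rcases n.eq_zero_or_pos with rfl | hn
  · exact Nat.zero_le _
  obtain ⟨m, σ, hσ, hσβ, hmn, hnm⟩ := hβ.isSimple.exists_contains hn
  have hmk : m ≤ k := hsimple m σ (hβ.mem_of_isSimple hσ hσβ fun h => hmn.not_ge h.le) hσ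
  omega

/-- If every simple permutation in the class `C` has length at most `k` (where `k ≥ 1`),
then every basis element of the wreath closure of `C` is a simple permutation of length
at most `k + 2`. -/
theorem statement11 (k : ℕ) (hk : 1 ≤ k) (C : ∀ n, Set (Perm n)) (hC : IsPermClass C)
    (hsimple : ∀ (n : ℕ) (π : Perm n), π ∈ C n → IsSimple π → n ≤ k) :
    ∀ (n : ℕ) (β : Perm n), InBasis (WreathClosure C) β → IsSimple β ∧ n ≤ k + 2 :=
  statement11_general k C hsimple
end

section
/- The set of properties {AL, BR, ER, {1}} is query-complete, where AL is the set of alternating permutations, BR is the set of permutations of length at least 2 beginning with a rise, ER is the set of permutations of length at least 2 ending with a rise, and {1} consists of the unique permutation of length 1. -/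
/-- `π` is alternating: no entry (other than the first and last) lies strictly
between its two neighbours. -/
def Alternating {n : ℕ} (π : Perm n) : Prop :=
  ∀ (i : ℕ) (h : i + 2 < n),
    ¬(π ⟨i, by omega⟩ < π ⟨i + 1, by omega⟩ ∧ π ⟨i + 1, by omega⟩ < π ⟨i + 2, h⟩) ∧
    ¬(π ⟨i + 2, h⟩ < π ⟨i + 1, by omega⟩ ∧ π ⟨i + 1, by omega⟩ < π ⟨i, by omega⟩)

/-- `π` is the inflation `σ[α 0, …, α (m-1)]` of `σ` by the nonempty permutations
`α i` (of lengths `k i ≥ 1`): `π` has length `∑ i, k i` and its value at position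
`(∑_{t < i} k t) + j` equals `(∑_{t : σ t < σ i} k t) + α i j`. -/
def IsInflation {N m : ℕ} {k : Fin m → ℕ} (σ : Perm m) (α : ∀ i, Perm (k i))
    (π : Perm N) : Prop :=
  (∀ i, 0 < k i) ∧ N = ∑ i, k i ∧
    ∀ (i : Fin m) (j : Fin (k i)) (p : Fin N),
      (p : ℕ) = (∑ t ∈ Finset.univ.filter fun t => t < i, k t) + (j : ℕ) →
      (π p : ℕ) = (∑ t ∈ Finset.univ.filter fun t => σ t < σ i, k t) + (α i j : ℕ)

/-- A set of properties (a property is a set of permutations) is query-complete: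
whether an inflation `σ[α 0, …, α (m-1)]` satisfies a property `P` of the set depends
only on `σ` and on which properties of the set each block `α i` satisfies. -/
def QueryComplete (Ps : Set (∀ n, Set (Perm n))) : Prop :=
  ∀ ⦃m : ℕ⦄ (σ : Perm m) (k k' : Fin m → ℕ)
    (α : ∀ i, Perm (k i)) (α' : ∀ i, Perm (k' i)),
    (∀ i : Fin m, ∀ Q ∈ Ps, α i ∈ Q (k i) ↔ α' i ∈ Q (k' i)) →
    ∀ P ∈ Ps, ∀ ⦃N N' : ℕ⦄ (π : Perm N) (π' : Perm N'),
      IsInflation σ α π → IsInflation σ α' π' → (π ∈ P N ↔ π' ∈ P N')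

/-- The property of being alternating. -/
def AL : ∀ n, Set (Perm n) := fun _ => {π | Alternating π}

/-- The property of having length at least `2` and beginning with a rise. -/
def BR : ∀ n, Set (Perm n) := fun n => {π | ∃ h : 1 < n, π ⟨0, by omega⟩ < π ⟨1, h⟩}

/-- The property of having length at least `2` and ending with a rise. -/
def ER : ∀ n, Set (Perm n) := fun n =>
  {π | ∃ h : 1 < n, π ⟨n - 2, by omega⟩ < π ⟨n - 1, by omega⟩}

/-- The property of being the permutation of length `1`. -/
def OneP : ∀ n, Set (Perm n) := fun n => {_π | n = 1}

/-! An inflation is, up to order isomorphism of its positions and of its values, a lexicographic sum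
of its blocks. Two consecutive positions lie either in one block or are the last position of a block
and the first position of the next one; in the second case `σ` alone decides whether there is a
rise. A block of length `1` is the one whose first position is also its last, so the comparisons
with both of its neighbours are decided by `σ`. A longer block meets its neighbours only through its
final step and its initial step, that is, through `ER` and `BR`.
-/

section Sequences

variable {ι ι' β β' : Type*} [Preorder ι] [Preorder ι'] [LT β] [LT β']

/-- An ordered sequence whose rises and non-rises alternate. For an injective sequence in a linear
order this says that no entry lies strictly between its two neighbours. -/
def AlternatingSeq (f : ι → β) : Prop :=
  ∀ ⦃p q r⦄, p ⋖ q → q ⋖ r → (f p < f q ↔ ¬f q < f r)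

/-- An ordered sequence whose first entry is smaller than its second one. -/
def BeginsWithRise (f : ι → β) : Prop :=
  ∃ p q, IsMin p ∧ p ⋖ q ∧ f p < f q

/-- An ordered sequence whose last entry is larger than the one before it. -/
def EndsWithRise (f : ι → β) : Prop :=
  ∃ p q, p ⋖ q ∧ IsMax q ∧ f p < f q

variable {f : ι → β} {g : ι' → β'}

theorem alternatingSeq_iff_of_orderIso (e : ι ≃o ι')
    (h : ∀ p q, g (e p) < g (e q) ↔ f p < f q) : AlternatingSeq g ↔ AlternatingSeq f := by
  simp only [AlternatingSeq, e.surjective.forall, apply_covBy_apply_iff, h]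

theorem beginsWithRise_iff_of_orderIso (e : ι ≃o ι')
    (h : ∀ p q, g (e p) < g (e q) ↔ f p < f q) : BeginsWithRise g ↔ BeginsWithRise f := by
  simp only [BeginsWithRise, e.surjective.exists, apply_covBy_apply_iff, e.isMin_apply, h]

theorem endsWithRise_iff_of_orderIso (e : ι ≃o ι')
    (h : ∀ p q, g (e p) < g (e q) ↔ f p < f q) : EndsWithRise g ↔ EndsWithRise f := by
  simp only [EndsWithRise, e.surjective.exists, apply_covBy_apply_iff, e.isMax_apply, h]

end Sequences

section LinearOrder

variable {ι β : Type*} [LinearOrder ι]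

theorem subsingleton_of_isMin_of_isMax {a : ι} (hmin : IsMin a) (hmax : IsMax a) :
    Subsingleton ι :=
  ⟨fun x y => (hmin.isBot x |>.antisymm (hmax.isTop x)).symm.trans
    (hmin.isBot y |>.antisymm (hmax.isTop y))⟩

theorem exists_isMin (ι : Type*) [LinearOrder ι] [Finite ι] [Nonempty ι] : ∃ a : ι, IsMin a :=
  (Finite.exists_min id).imp fun _ h _ _ => h _

theorem exists_isMax (ι : Type*) [LinearOrder ι] [Finite ι] [Nonempty ι] : ∃ a : ι, IsMax a :=
  exists_isMin ιᵒᵈ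

theorem exists_isMin_covBy (ι : Type*) [LinearOrder ι] [Finite ι] [Nontrivial ι] :
    ∃ a b : ι, IsMin a ∧ a ⋖ b := by
  obtain ⟨a, ha⟩ := exists_isMin ι
  have ha' : ¬IsMax a := fun h => not_subsingleton ι (subsingleton_of_isMin_of_isMax ha h)
  exact ⟨a, _, ha, (exists_covBy_of_wellFoundedLT ha').choose_spec⟩

theorem exists_covBy_isMax (ι : Type*) [LinearOrder ι] [Finite ι] [Nontrivial ι] :
    ∃ a b : ι, a ⋖ b ∧ IsMax b :=
  let ⟨b, a, hb, hab⟩ := exists_isMin_covBy ιᵒᵈ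
  ⟨a, b, hab.ofDual, hb⟩

theorem not_lt_lt_and_not_gt_gt_iff {a b c : ι} (hab : a ≠ b) (hbc : b ≠ c) :
    ¬(a < b ∧ b < c) ∧ ¬(c < b ∧ b < a) ↔ (a < b ↔ ¬b < c) := by
  rw [← not_lt.trans hab.symm.le_iff_lt, ← not_lt.trans hbc.symm.le_iff_lt]
  tauto

variable [LT β] {f : ι → β} {p q : ι}

theorem beginsWithRise_iff_of_isMin (hp : IsMin p) (hpq : p ⋖ q) :
    BeginsWithRise f ↔ f p < f q := by
  refine ⟨fun ⟨a, b, ha, hab, h⟩ => ?_, fun h => ⟨p, q, hp, hpq, h⟩⟩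
  obtain rfl : a = p := ha.isBot p |>.antisymm (hp.isBot a)
  rwa [hpq.unique_right hab]

theorem endsWithRise_iff_of_isMax (hpq : p ⋖ q) (hq : IsMax q) :
    EndsWithRise f ↔ f p < f q := by
  refine ⟨fun ⟨a, b, hab, hb, h⟩ => ?_, fun h => ⟨p, q, hpq, hq, h⟩⟩
  obtain rfl : b = q := hq.isTop b |>.antisymm (hb.isTop q)
  rwa [hpq.unique_left hab]

end LinearOrder

section SigmaLex

variable {ι : Type*} {κ : ι → Type*} [PartialOrder ι] [∀ i, Preorder (κ i)] {i j : ι}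

theorem sigmaLex_mk_lt_mk_iff {a b : κ i} :
    toLex (Sigma.mk i a) < toLex (Sigma.mk i b) ↔ a < b := by
  refine ⟨?_, fun h => Sigma.Lex.right a b h⟩
  rintro (⟨_, _, h⟩ | ⟨_, _, h⟩)
  · exact absurd h (lt_irrefl i)
  · exact h

theorem sigmaLex_mk_lt_mk_iff_of_ne (hij : i ≠ j) {a : κ i} {b : κ j} :
    toLex (Sigma.mk i a) < toLex (Sigma.mk j b) ↔ i < j := by
  refine ⟨?_, fun h => Sigma.Lex.left a b h⟩
  rintro (⟨_, _, h⟩ | ⟨_, _, -⟩)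
  · exact h
  · exact absurd rfl hij

theorem sigmaLex_mk_covBy_mk_iff {a b : κ i} :
    toLex (Sigma.mk i a) ⋖ toLex (Sigma.mk i b) ↔ a ⋖ b := by
  simp only [CovBy, toLex.surjective.forall, Sigma.forall, sigmaLex_mk_lt_mk_iff]
  refine and_congr_right fun _ => ⟨fun h c => by simpa [sigmaLex_mk_lt_mk_iff] using @h i c, ?_⟩
  intro h k c hac hcb
  obtain rfl | hik := eq_or_ne i k
  · exact h (sigmaLex_mk_lt_mk_iff.1 hac) (sigmaLex_mk_lt_mk_iff.1 hcb)
  · exact ((sigmaLex_mk_lt_mk_iff_of_ne hik).1 hac).not_gt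
      ((sigmaLex_mk_lt_mk_iff_of_ne hik.symm).1 hcb)

theorem isMin_sigmaLex_mk_iff [∀ i, Nonempty (κ i)] {a : κ i} :
    IsMin (toLex (Sigma.mk i a)) ↔ IsMin i ∧ IsMin a := by
  simp only [isMin_iff_forall_not_lt, toLex.surjective.forall, Sigma.forall]
  refine ⟨fun h => ⟨fun k hk => ?_, fun c hc => h i c (sigmaLex_mk_lt_mk_iff.2 hc)⟩, ?_⟩
  · exact h k (Classical.arbitrary _) ((sigmaLex_mk_lt_mk_iff_of_ne hk.ne).2 hk)
  · rintro ⟨hi, ha⟩ k c hc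
    obtain rfl | hki := eq_or_ne k i
    · exact ha c (sigmaLex_mk_lt_mk_iff.1 hc)
    · exact hi k ((sigmaLex_mk_lt_mk_iff_of_ne hki).1 hc)

theorem isMax_sigmaLex_mk_iff [∀ i, Nonempty (κ i)] {a : κ i} :
    IsMax (toLex (Sigma.mk i a)) ↔ IsMax i ∧ IsMax a := by
  simp only [isMax_iff_forall_not_lt, toLex.surjective.forall, Sigma.forall]
  refine ⟨fun h => ⟨fun k hk => ?_, fun c hc => h i c (sigmaLex_mk_lt_mk_iff.2 hc)⟩, ?_⟩
  · exact h k (Classical.arbitrary _) ((sigmaLex_mk_lt_mk_iff_of_ne hk.ne).2 hk)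
  · rintro ⟨hi, ha⟩ k c hc
    obtain rfl | hki := eq_or_ne k i
    · exact ha c (sigmaLex_mk_lt_mk_iff.1 hc)
    · exact hi k ((sigmaLex_mk_lt_mk_iff_of_ne hki.symm).1 hc)

theorem sigmaLex_mk_covBy_mk_iff_of_ne [∀ i, Nonempty (κ i)] (hij : i ≠ j) {a : κ i} {b : κ j} :
    toLex (Sigma.mk i a) ⋖ toLex (Sigma.mk j b) ↔ i ⋖ j ∧ IsMax a ∧ IsMin b := by
  simp only [CovBy, toLex.surjective.forall, Sigma.forall, sigmaLex_mk_lt_mk_iff_of_ne hij,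
    isMax_iff_forall_not_lt, isMin_iff_forall_not_lt, and_assoc]
  refine and_congr_right fun hlt => ⟨fun h => ⟨fun k hik hkj => ?_, fun c hc => ?_, fun c hc => ?_⟩,
    fun ⟨hbetween, ha, hb⟩ k c hac hcb => ?_⟩
  · exact h k (Classical.arbitrary _) ((sigmaLex_mk_lt_mk_iff_of_ne hik.ne).2 hik)
      ((sigmaLex_mk_lt_mk_iff_of_ne hkj.ne).2 hkj)
  · exact h i c (sigmaLex_mk_lt_mk_iff.2 hc) ((sigmaLex_mk_lt_mk_iff_of_ne hij).2 hlt)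
  · exact h j c ((sigmaLex_mk_lt_mk_iff_of_ne hij).2 hlt) (sigmaLex_mk_lt_mk_iff.2 hc)
  · obtain rfl | hik := eq_or_ne i k
    · exact ha c (sigmaLex_mk_lt_mk_iff.1 hac)
    obtain rfl | hkj := eq_or_ne k j
    · exact hb c (sigmaLex_mk_lt_mk_iff.1 hcb)
    · exact hbetween ((sigmaLex_mk_lt_mk_iff_of_ne hik).1 hac)
        ((sigmaLex_mk_lt_mk_iff_of_ne hkj).1 hcb)

theorem forall_covBy_covBy_sigmaLex [∀ i, Nonempty (κ i)]
    {P : (Σₗ i, κ i) → (Σₗ i, κ i) → (Σₗ i, κ i) → Prop} :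
    (∀ ⦃p q r⦄, p ⋖ q → q ⋖ r → P p q r) ↔
      (∀ i ⦃a b c : κ i⦄, a ⋖ b → b ⋖ c → P (toLex ⟨i, a⟩) (toLex ⟨i, b⟩) (toLex ⟨i, c⟩)) ∧
      (∀ i j, i ⋖ j → ∀ (a b : κ i) (c : κ j), a ⋖ b → IsMax b → IsMin c →
        P (toLex ⟨i, a⟩) (toLex ⟨i, b⟩) (toLex ⟨j, c⟩)) ∧
      (∀ i j, i ⋖ j → ∀ (a : κ i) (b c : κ j), IsMax a → IsMin b → b ⋖ c →
        P (toLex ⟨i, a⟩) (toLex ⟨j, b⟩) (toLex ⟨j, c⟩)) ∧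
      ∀ i j l, i ⋖ j → j ⋖ l → ∀ (a : κ i) (b : κ j) (c : κ l),
        IsMax a → IsMin b → IsMax b → IsMin c →
          P (toLex ⟨i, a⟩) (toLex ⟨j, b⟩) (toLex ⟨l, c⟩) := by
  have covBy_within {i} {a b : κ i} := sigmaLex_mk_covBy_mk_iff (a := a) (b := b)
  have covBy_across {i j} (h : i ≠ j) {a : κ i} {b : κ j} :=
    sigmaLex_mk_covBy_mk_iff_of_ne h (a := a) (b := b)
  constructor
  · refine fun h => ⟨fun i a b c hab hbc => ?_, fun i j hij a b c hab hb hc => ?_,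
      fun i j hij a b c ha hb hbc => ?_, fun i j l hij hjl a b c ha hb hb' hc => ?_⟩
    · exact h (covBy_within.2 hab) (covBy_within.2 hbc)
    · exact h (covBy_within.2 hab) ((covBy_across hij.ne).2 ⟨hij, hb, hc⟩)
    · exact h ((covBy_across hij.ne).2 ⟨hij, ha, hb⟩) (covBy_within.2 hbc)
    · exact h ((covBy_across hij.ne).2 ⟨hij, ha, hb⟩) ((covBy_across hjl.ne).2 ⟨hjl, hb', hc⟩)
  · rintro ⟨within, ending, beginning, singleton⟩ ⟨i, a⟩ ⟨j, b⟩ ⟨l, c⟩ hab hbc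
    obtain rfl | hjl := eq_or_ne j l <;> obtain rfl | hij := eq_or_ne i j
    · exact within i (covBy_within.1 hab) (covBy_within.1 hbc)
    · obtain ⟨hij, ha, hb⟩ := (covBy_across hij).1 hab
      exact beginning i j hij a b c ha hb (covBy_within.1 hbc)
    · obtain ⟨hil, hb, hc⟩ := (covBy_across hjl).1 hbc
      exact ending i l hil a b c (covBy_within.1 hab) hb hc
    · obtain ⟨hij, ha, hb⟩ := (covBy_across hij).1 hab
      obtain ⟨hjl, hb', hc⟩ := (covBy_across hjl).1 hbc
      exact singleton i j l hij hjl a b c ha hb hb' hc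

end SigmaLex

section LexInflation

variable {ι β γ : Type*} {κ : ι → Type*}

/-- The inflation of the sequence `σ` by the sequences `α i`, indexed by the lexicographic sum of
the index orders of the blocks. Pairing the entries of block `i` with `σ i` in a lexicographic
product reproduces the order pattern of an inflation without shifting any values. -/
def lexInflation (σ : ι → β) (α : ∀ i, κ i → γ) (x : Σₗ i, κ i) : β ×ₗ γ :=
  toLex (σ (ofLex x).1, α (ofLex x).1 (ofLex x).2)

section Preorder

variable [Preorder β] [Preorder γ] {σ : ι → β} {α : ∀ i, κ i → γ} {i j : ι}

theorem lexInflation_lt_iff {a b : κ i} :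
    lexInflation σ α (toLex ⟨i, a⟩) < lexInflation σ α (toLex ⟨i, b⟩) ↔ α i a < α i b := by
  simp [lexInflation, Prod.Lex.toLex_lt_toLex]

theorem lexInflation_lt_iff_of_ne (hσ : σ.Injective) (hij : i ≠ j) {a : κ i} {b : κ j} :
    lexInflation σ α (toLex ⟨i, a⟩) < lexInflation σ α (toLex ⟨j, b⟩) ↔ σ i < σ j := by
  simp [lexInflation, Prod.Lex.toLex_lt_toLex, hσ.ne hij]

theorem strictMono_lexInflation [PartialOrder ι] [∀ i, Preorder (κ i)] (hσ : StrictMono σ)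
    (hα : ∀ i, StrictMono (α i)) : StrictMono (lexInflation σ α) := by
  rintro _ _ (⟨a, b, hij⟩ | ⟨a, b, hab⟩)
  · exact Prod.Lex.left _ _ (hσ hij)
  · exact Prod.Lex.right _ (hα _ hab)

end Preorder

variable [LinearOrder ι] [∀ i, LinearOrder (κ i)] [∀ i, Finite (κ i)] [∀ i, Nonempty (κ i)]
  [Preorder β] [Preorder γ] {σ : ι → β}

theorem beginsWithRise_lexInflation_iff (hσ : σ.Injective) (α : ∀ i, κ i → γ) :
    BeginsWithRise (lexInflation σ α) ↔ (∃ i, IsMin i ∧ BeginsWithRise (α i)) ∨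
      ∃ i j, IsMin i ∧ i ⋖ j ∧ Subsingleton (κ i) ∧ σ i < σ j := by
  simp only [BeginsWithRise, toLex.surjective.exists, Sigma.exists]
  constructor
  · rintro ⟨i, a, j, b, hmin, hcov, hlt⟩
    obtain ⟨hi, ha⟩ := isMin_sigmaLex_mk_iff.1 hmin
    obtain rfl | hij := eq_or_ne i j
    · exact .inl ⟨i, hi, a, b, ha, sigmaLex_mk_covBy_mk_iff.1 hcov,
        lexInflation_lt_iff.1 hlt⟩
    · obtain ⟨hcov, ha', -⟩ := (sigmaLex_mk_covBy_mk_iff_of_ne hij).1 hcov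
      exact .inr ⟨i, j, hi, hcov, subsingleton_of_isMin_of_isMax ha ha',
        (lexInflation_lt_iff_of_ne hσ hij).1 hlt⟩
  · rintro (⟨i, hi, a, b, ha, hab, hlt⟩ | ⟨i, j, hi, hij, hsub, hlt⟩)
    · exact ⟨i, a, i, b, isMin_sigmaLex_mk_iff.2 ⟨hi, ha⟩, sigmaLex_mk_covBy_mk_iff.2 hab,
        lexInflation_lt_iff.2 hlt⟩
    · obtain ⟨a, ha⟩ := exists_isMin (κ i)
      obtain ⟨b, hb⟩ := exists_isMin (κ j)
      exact ⟨i, a, j, b, isMin_sigmaLex_mk_iff.2 ⟨hi, ha⟩,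
        (sigmaLex_mk_covBy_mk_iff_of_ne hij.ne).2 ⟨hij, Subsingleton.isMax a, hb⟩,
        (lexInflation_lt_iff_of_ne hσ hij.ne).2 hlt⟩

theorem endsWithRise_lexInflation_iff (hσ : σ.Injective) (α : ∀ i, κ i → γ) :
    EndsWithRise (lexInflation σ α) ↔ (∃ j, IsMax j ∧ EndsWithRise (α j)) ∨
      ∃ i j, i ⋖ j ∧ IsMax j ∧ Subsingleton (κ j) ∧ σ i < σ j := by
  simp only [EndsWithRise, toLex.surjective.exists, Sigma.exists]
  constructor
  · rintro ⟨i, a, j, b, hcov, hmax, hlt⟩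
    obtain ⟨hj, hb⟩ := isMax_sigmaLex_mk_iff.1 hmax
    obtain rfl | hij := eq_or_ne i j
    · exact .inl ⟨i, hj, a, b, sigmaLex_mk_covBy_mk_iff.1 hcov, hb,
        lexInflation_lt_iff.1 hlt⟩
    · obtain ⟨hcov, -, hb'⟩ := (sigmaLex_mk_covBy_mk_iff_of_ne hij).1 hcov
      exact .inr ⟨i, j, hcov, hj, subsingleton_of_isMin_of_isMax hb' hb,
        (lexInflation_lt_iff_of_ne hσ hij).1 hlt⟩
  · rintro (⟨j, hj, a, b, hab, hb, hlt⟩ | ⟨i, j, hij, hj, hsub, hlt⟩)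
    · exact ⟨j, a, j, b, sigmaLex_mk_covBy_mk_iff.2 hab, isMax_sigmaLex_mk_iff.2 ⟨hj, hb⟩,
        lexInflation_lt_iff.2 hlt⟩
    · obtain ⟨a, ha⟩ := exists_isMax (κ i)
      obtain ⟨b, hb⟩ := exists_isMax (κ j)
      exact ⟨i, a, j, b, (sigmaLex_mk_covBy_mk_iff_of_ne hij.ne).2 ⟨hij, ha, Subsingleton.isMin b⟩,
        isMax_sigmaLex_mk_iff.2 ⟨hj, hb⟩, (lexInflation_lt_iff_of_ne hσ hij.ne).2 hlt⟩

theorem alternatingSeq_lexInflation_iff (hσ : σ.Injective) (α : ∀ i, κ i → γ) :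
    AlternatingSeq (lexInflation σ α) ↔ (∀ i, AlternatingSeq (α i)) ∧
      (∀ i j, i ⋖ j → Nontrivial (κ i) → (EndsWithRise (α i) ↔ ¬σ i < σ j)) ∧
      (∀ i j, i ⋖ j → Nontrivial (κ j) → (σ i < σ j ↔ ¬BeginsWithRise (α j))) ∧
      ∀ i j l, i ⋖ j → j ⋖ l → Subsingleton (κ j) → (σ i < σ j ↔ ¬σ j < σ l) := by
  have rise_across {i j} (h : i ⋖ j) {a : κ i} {b : κ j} :=
    lexInflation_lt_iff_of_ne (α := α) hσ h.ne (a := a) (b := b)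
  rw [AlternatingSeq, forall_covBy_covBy_sigmaLex]
  simp only [lexInflation_lt_iff]
  refine and_congr .rfl (and_congr ?_ (and_congr ?_ ?_))
  · refine forall₃_congr fun i j hij => ⟨fun h _ => ?_, fun h a b c hab hb _ => ?_⟩
    · obtain ⟨a, b, hab, hb⟩ := exists_covBy_isMax (κ i)
      obtain ⟨c, hc⟩ := exists_isMin (κ j)
      simpa only [endsWithRise_iff_of_isMax hab hb, rise_across hij] using h a b c hab hb hc
    · simpa only [endsWithRise_iff_of_isMax hab hb, rise_across hij] using h ⟨a, b, hab.ne⟩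
  · refine forall₃_congr fun i j hij => ⟨fun h _ => ?_, fun h a b c _ hb hbc => ?_⟩
    · obtain ⟨a, ha⟩ := exists_isMax (κ i)
      obtain ⟨b, c, hb, hbc⟩ := exists_isMin_covBy (κ j)
      simpa only [beginsWithRise_iff_of_isMin hb hbc, rise_across hij] using h a b c ha hb hbc
    · simpa only [beginsWithRise_iff_of_isMin hb hbc, rise_across hij] using h ⟨b, c, hbc.ne⟩
  · refine forall₅_congr fun i j l hij hjl => ⟨fun h _ => ?_, fun h a b c _ hb hb' _ => ?_⟩
    · obtain ⟨a, ha⟩ := exists_isMax (κ i)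
      obtain ⟨b⟩ : Nonempty (κ j) := inferInstance
      obtain ⟨c, hc⟩ := exists_isMin (κ l)
      simpa only [rise_across hij, rise_across hjl] using
        h a b c ha (Subsingleton.isMin b) (Subsingleton.isMax b) hc
    · simpa only [rise_across hij, rise_across hjl] using h (subsingleton_of_isMin_of_isMax hb hb')

end LexInflation

section BlockOffset

variable {ι β : Type*} [Fintype ι] [LinearOrder β]

/-- The total length of the blocks that `σ` places below block `i`, for blocks of lengths `k`. This
is the shift of the values of block `i` in an inflation of `σ`, and for `σ = id` the position at
which block `i` starts. -/
def blockOffset (σ : ι → β) (k : ι → ℕ) (i : ι) : ℕ :=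
  ∑ t with σ t < σ i, k t

theorem blockOffset_add_le_sum (σ : ι → β) (k : ι → ℕ) (i : ι) :
    blockOffset σ k i + k i ≤ ∑ t, k t := by
  classical
  rw [blockOffset, add_comm, ← Finset.sum_insert (by simp)]
  exact Finset.sum_le_sum_of_subset (Finset.subset_univ _)

theorem blockOffset_add_le_blockOffset {σ : ι → β} (k : ι → ℕ) {i j : ι} (h : σ i < σ j) :
    blockOffset σ k i + k i ≤ blockOffset σ k j := by
  classical
  rw [blockOffset, add_comm, ← Finset.sum_insert (by simp)]
  refine Finset.sum_le_sum_of_subset fun t ht => ?_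
  simp only [Finset.mem_insert, Finset.mem_filter_univ] at ht ⊢
  obtain rfl | ht := ht
  · exact h
  · exact ht.trans h

theorem blockOffset_add_lt_iff {σ : ι → β} (hσ : σ.Injective) {k : ι → ℕ} {i j : ι} {a b : ℕ}
    (ha : a < k i) (hb : b < k j) :
    blockOffset σ k i + a < blockOffset σ k j + b ↔ toLex (σ i, a) < toLex (σ j, b) := by
  rw [Prod.Lex.toLex_lt_toLex]
  obtain hlt | heq | hgt := lt_trichotomy (σ i) (σ j)
  · have := blockOffset_add_le_blockOffset k hlt
    exact iff_of_true (by lia) (.inl hlt)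
  · obtain rfl := hσ heq
    simp
  · have := blockOffset_add_le_blockOffset k hgt
    exact iff_of_false (by lia) (by simp [hgt.not_gt, hgt.ne'])

end BlockOffset

section Perm

variable {n : ℕ} (π : Perm n)

/-- The one-line notation of `π`, with values in `ℕ` so that permutations of different lengths can
be the blocks of one inflation. -/
def entries (p : Fin n) : ℕ := π p

theorem mem_AL_iff_alternatingSeq : π ∈ AL n ↔ AlternatingSeq (entries π) := by
  simp only [AL, Set.mem_ofPred_eq, Alternating, AlternatingSeq, entries, Fin.covBy_iff,
    Nat.covBy_iff_add_one_eq, Fin.val_fin_lt]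
  constructor
  · rintro h ⟨p, hp⟩ ⟨_, hq⟩ ⟨_, hr⟩ rfl rfl
    exact (not_lt_lt_and_not_gt_gt_iff (by simp) (by simp)).1 (h p hr)
  · intro h p hr
    exact (not_lt_lt_and_not_gt_gt_iff (by simp) (by simp)).2 (h rfl rfl)

theorem mem_BR_iff_beginsWithRise : π ∈ BR n ↔ BeginsWithRise (entries π) := by
  simp only [BR, Set.mem_ofPred_eq, BeginsWithRise, entries, Fin.covBy_iff,
    Nat.covBy_iff_add_one_eq]
  constructor
  · rintro ⟨h, hlt⟩
    exact ⟨_, _, fun _ _ => Nat.zero_le _, rfl, hlt⟩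
  · rintro ⟨⟨p, hp⟩, ⟨_, hq⟩, hmin, rfl, hlt⟩
    obtain rfl : p = 0 := Nat.le_zero.1 (hmin.isBot ⟨0, by lia⟩)
    exact ⟨hq, hlt⟩

theorem mem_ER_iff_endsWithRise : π ∈ ER n ↔ EndsWithRise (entries π) := by
  simp only [ER, Set.mem_ofPred_eq, EndsWithRise, entries, Fin.covBy_iff,
    Nat.covBy_iff_add_one_eq]
  constructor
  · rintro ⟨h, hlt⟩
    have hn : n - 2 + 1 = n - 1 := by lia
    exact ⟨_, _, hn, fun q _ => Nat.le_sub_one_of_lt q.2, hlt⟩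
  · rintro ⟨⟨p, hp⟩, ⟨_, hq⟩, rfl, hmax, hlt⟩
    obtain rfl : n = p + 2 := by
      have : n - 1 ≤ p + 1 := hmax.isTop ⟨n - 1, by lia⟩
      lia
    exact ⟨by lia, hlt⟩

theorem mem_OneP_iff_subsingleton [Nonempty (Fin n)] : π ∈ OneP n ↔ Subsingleton (Fin n) := by
  have hn : 0 < n := Fin.pos_iff_nonempty.2 inferInstance
  rw [Fin.subsingleton_iff_le_one]
  exact ⟨fun h => h.le, fun h => h.antisymm hn⟩

end Perm

section Inflation

variable {N m : ℕ} {k : Fin m → ℕ} {σ : Perm m} {α : ∀ i, Perm (k i)} {π : Perm N}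

theorem IsInflation.exists_orderIso (hI : IsInflation σ α π) :
    ∃ e : (Σₗ i, Fin (k i)) ≃o Fin N, ∀ x y, entries π (e x) < entries π (e y) ↔
      lexInflation σ (fun i => entries (α i)) x < lexInflation σ (fun i => entries (α i)) y := by
  obtain ⟨-, rfl, value⟩ := hI
  let position (x : Σₗ i, Fin (k i)) : Fin (∑ i, k i) :=
    ⟨blockOffset id k (ofLex x).1 + (ofLex x).2,
      (Nat.add_lt_add_left (ofLex x).2.2 _).trans_le (blockOffset_add_le_sum id k _)⟩
  have hmono : StrictMono position := fun x y hxy =>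
    (blockOffset_add_lt_iff Function.injective_id (ofLex x).2.2 (ofLex y).2.2).2 <|
      strictMono_lexInflation (α := fun i (j : Fin (k i)) => (j : ℕ)) strictMono_id
        (fun _ => Fin.val_strictMono) hxy
  have hbij : Function.Bijective position :=
    (Fintype.bijective_iff_injective_and_card _).2 ⟨hmono.injective, by
      simp only [Fintype.card_lex, Fintype.card_sigma, Fintype.card_fin]⟩
  refine ⟨hmono.orderIsoOfSurjective position hbij.surjective, fun x y => ?_⟩
  have hvalue (x : Σₗ i, Fin (k i)) : entries π (position x) =
      blockOffset σ k (ofLex x).1 + entries (α (ofLex x).1) (ofLex x).2 :=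
    value _ _ _ rfl
  rw [StrictMono.coe_orderIsoOfSurjective, hvalue, hvalue]
  exact blockOffset_add_lt_iff σ.injective (Fin.is_lt _) (Fin.is_lt _)

theorem IsInflation.nonempty (hI : IsInflation σ α π) (i : Fin m) : Nonempty (Fin (k i)) :=
  Fin.pos_iff_nonempty.1 (hI.1 i)

theorem IsInflation.mem_OneP_iff (hI : IsInflation σ α π) :
    π ∈ OneP N ↔ m = 1 ∧ ∀ i, α i ∈ OneP (k i) := by
  obtain ⟨hpos, hN, -⟩ := hI
  change N = 1 ↔ m = 1 ∧ ∀ i, k i = 1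
  have hone (h : N = 1) (i : Fin m) : k i = 1 := by
    have : k i ≤ ∑ t, k t := Finset.single_le_sum_of_canonicallyOrdered (Finset.mem_univ i)
    have := hpos i
    lia
  have hlength (h : ∀ i, k i = 1) : N = m := by simp [hN, h]
  exact ⟨fun h => ⟨(hlength (hone h)).symm.trans h, hone h⟩, fun ⟨hm, h⟩ => (hlength h).trans hm⟩

theorem IsInflation.mem_BR_iff (hI : IsInflation σ α π) :
    π ∈ BR N ↔ (∃ i, IsMin i ∧ α i ∈ BR (k i)) ∨
      ∃ i j, IsMin i ∧ i ⋖ j ∧ α i ∈ OneP (k i) ∧ σ i < σ j := by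
  have := hI.nonempty
  obtain ⟨e, he⟩ := hI.exists_orderIso
  simp only [mem_BR_iff_beginsWithRise, mem_OneP_iff_subsingleton,
    beginsWithRise_iff_of_orderIso e he, beginsWithRise_lexInflation_iff σ.injective]

theorem IsInflation.mem_ER_iff (hI : IsInflation σ α π) :
    π ∈ ER N ↔ (∃ j, IsMax j ∧ α j ∈ ER (k j)) ∨
      ∃ i j, i ⋖ j ∧ IsMax j ∧ α j ∈ OneP (k j) ∧ σ i < σ j := by
  have := hI.nonempty
  obtain ⟨e, he⟩ := hI.exists_orderIso
  simp only [mem_ER_iff_endsWithRise, mem_OneP_iff_subsingleton, endsWithRise_iff_of_orderIso e he,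
    endsWithRise_lexInflation_iff σ.injective]

theorem IsInflation.mem_AL_iff (hI : IsInflation σ α π) :
    π ∈ AL N ↔ (∀ i, α i ∈ AL (k i)) ∧
      (∀ i j, i ⋖ j → α i ∉ OneP (k i) → (α i ∈ ER (k i) ↔ ¬σ i < σ j)) ∧
      (∀ i j, i ⋖ j → α j ∉ OneP (k j) → (σ i < σ j ↔ α j ∉ BR (k j))) ∧
      ∀ i j l, i ⋖ j → j ⋖ l → α j ∈ OneP (k j) → (σ i < σ j ↔ ¬σ j < σ l) := by
  have := hI.nonempty
  obtain ⟨e, he⟩ := hI.exists_orderIso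
  simp only [mem_AL_iff_alternatingSeq, mem_BR_iff_beginsWithRise, mem_ER_iff_endsWithRise,
    mem_OneP_iff_subsingleton, not_subsingleton_iff_nontrivial, alternatingSeq_iff_of_orderIso e he,
    alternatingSeq_lexInflation_iff σ.injective]

end Inflation

/-- The set of properties `{AL, BR, ER, {1}}` is query-complete. -/
theorem statement13 : QueryComplete {AL, BR, ER, OneP} := by
  intro m σ k k' α α' hQ P hP N N' π π' hI hI'
  have hAL i := hQ i AL (by simp)
  have hBR i := hQ i BR (by simp)
  have hER i := hQ i ER (by simp)
  have hOneP i := hQ i OneP (by simp)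
  rcases hP with rfl | rfl | rfl | rfl
  · simp only [hI.mem_AL_iff, hI'.mem_AL_iff, hAL, hBR, hER, hOneP]
  · simp only [hI.mem_BR_iff, hI'.mem_BR_iff, hBR, hOneP]
  · simp only [hI.mem_ER_iff, hI'.mem_ER_iff, hER, hOneP]
  · simp only [hI.mem_OneP_iff, hI'.mem_OneP_iff, hOneP]
end

section
/- Let f = Σ_{n≥1} s_n xⁿ ∈ ℚ[[x]], where s_n is the number of separable permutations of length n, i.e. permutations of length n avoiding both 2413 and 3142. Then f² + (x − 1)f + x = 0; equivalently, the s_n are the large Schröder numbers. -/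
/-- The generating function `∑_{n ≥ 1} |S_n| xⁿ` of a set of permutations. -/
noncomputable def genFun (S : ∀ n, Set (Perm n)) : PowerSeries ℚ :=
  PowerSeries.mk fun n => if n = 0 then 0 else (Nat.card (S n) : ℚ)

/-- The permutation `2413` (`0`-based values `1, 3, 0, 2`). -/
def p2413 : Perm 4 := ⟨![1, 3, 0, 2], ![2, 0, 3, 1], by intro x; fin_cases x <;> decide,
  by intro x; fin_cases x <;> decide⟩

/-- The permutation `3142` (`0`-based values `2, 0, 3, 1`). -/
def p3142 : Perm 4 := ⟨![2, 0, 3, 1], ![1, 3, 0, 2], by intro x; fin_cases x <;> decide,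
  by intro x; fin_cases x <;> decide⟩

/-- The separable permutations: those avoiding both `2413` and `3142`. -/
def Separables : ∀ n, Set (Perm n) := fun _ =>
  {π | ¬ Contains p2413 π ∧ ¬ Contains p3142 π}

/-!
A permutation is sum-decomposable if some proper prefix of positions carries the smallest values,
and skew-decomposable if its complement is sum-decomposable. Cutting at the shortest such prefix
writes a sum-decomposable permutation uniquely as `σ ⊕ τ` with `σ` sum-indecomposable. Both `2413`
and `3142` are sum-indecomposable, so `σ ⊕ τ` is separable exactly when `σ` and `τ` are. Writing
`f`, `d` and `i` for the generating functions of all, the sum-decomposable and the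
sum-indecomposable separable permutations, this gives `f = d + i` and `d = i * f`.

A separable permutation of length at least two is either sum-decomposable or skew-decomposable, and
never both. Complementation preserves separability and exchanges the two kinds, whence `i = X + d`.
Eliminating `d` and `i` leaves the equation for `f`.
-/

namespace PermPattern

open Finset OrderDual

/-! ### Pattern containment -/

section Contains

variable {l m n : ℕ}

lemma contains_iff_exists_strictMono {σ : Perm m} {π : Perm n} :
    Contains σ π ↔ ∃ f : Fin m → Fin n, StrictMono f ∧ StrictMono (π ∘ f ∘ σ.symm) := by
  refine exists_congr fun f => and_congr_right fun _ => ⟨fun h s t hst => ?_, fun h s t => ?_⟩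
  · exact (h _ _).2 (by simpa using hst)
  · simpa using h.lt_iff_lt (a := σ s) (b := σ t)

lemma contains_of_strictMono {σ : Perm m} {π : Perm n} {f g : Fin m → Fin n}
    (hf : StrictMono f) (hg : StrictMono g) (h : ∀ s, π (f s) = g (σ s)) : Contains σ π :=
  ⟨f, hf, fun s t => by rw [h, h, hg.lt_iff_lt]⟩

lemma contains_trans {ρ : Perm l} {σ : Perm m} {π : Perm n} (hρσ : Contains ρ σ)
    (hσπ : Contains σ π) : Contains ρ π := by
  obtain ⟨f, hf, hρ⟩ := hρσ
  obtain ⟨g, hg, hσ⟩ := hσπ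
  exact ⟨g ∘ f, hg.comp hf, fun s t => (hσ _ _).trans (hρ s t)⟩

lemma le_of_contains {σ : Perm m} {π : Perm n} (h : Contains σ π) : m ≤ n := by
  obtain ⟨f, hf, -⟩ := h
  simpa using Fintype.card_le_of_injective f hf.injective

end Contains

/-! ### Sum cuts of sequences -/

section IsSumCut

/-- The sequence `f` has a sum cut at `k` if its first `k` entries form a nonempty proper prefix all
of whose values lie below all later values. A skew cut of `f` is a sum cut of `toDual ∘ f`. -/
def IsSumCut {α : Type*} [LT α] {n : ℕ} (f : Fin n → α) (k : ℕ) : Prop :=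
  0 < k ∧ k < n ∧ ∀ i j : Fin n, i < k → k ≤ j → f i < f j

/-- A sequence is sum-decomposable if it has a sum cut. It is skew-decomposable if `toDual ∘ f` is
sum-decomposable. -/
def IsSumDecomposable {α : Type*} [LT α] {n : ℕ} (f : Fin n → α) : Prop :=
  ∃ k, IsSumCut f k

/-- No four entries of the sequence `f` are in the relative order of `3142`. Since `2413` is the
complement of `3142`, avoidance of `2413` is `Avoids3142 (toDual ∘ f)`. -/
def Avoids3142 {ι α : Type*} [LT ι] [LT α] (f : ι → α) : Prop :=
  ∀ ⦃a b c d⦄, a < b → b < c → c < d → ¬ (f b < f d ∧ f d < f a ∧ f a < f c)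

variable {α : Type*} {n k : ℕ}

lemma IsSumDecomposable.two_le [LT α] {f : Fin n → α} (hf : IsSumDecomposable f) : 2 ≤ n := by
  obtain ⟨k, hk0, hkn, -⟩ := hf
  lia

lemma IsSumDecomposable.not_toDual [Preorder α] {f : Fin n → α} (hf : IsSumDecomposable f) :
    ¬ IsSumDecomposable (toDual ∘ f) := by
  rintro ⟨l, hl0, hln, hl⟩
  obtain ⟨k, hk0, hkn, hk⟩ := hf
  let first : Fin n := ⟨0, by lia⟩
  let last : Fin n := ⟨n - 1, by lia⟩
  have hlt : f first < f last := hk first last hk0 (Nat.le_sub_one_of_lt hkn)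
  have hgt : f last < f first := hl first last hl0 (Nat.le_sub_one_of_lt hln)
  exact lt_asymm hlt hgt

lemma Avoids3142.comp_strictMono {ι κ : Type*} [Preorder ι] [Preorder κ] [LT α] {f : κ → α}
    (hf : Avoids3142 f) {g : ι → κ} (hg : StrictMono g) : Avoids3142 (f ∘ g) :=
  fun _ _ _ _ hab hbc hcd => hf (hg hab) (hg hbc) (hg hcd)

lemma isSumDecomposable_or_toDual_fin_two [LinearOrder α] {f : Fin 2 → α} (hf : f.Injective) :
    IsSumDecomposable f ∨ IsSumDecomposable (toDual ∘ f) := by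
  have h01 : f 0 ≠ f 1 := hf.ne zero_ne_one
  refine h01.lt_or_gt.imp (fun h => ⟨1, ?_⟩) (fun h => ⟨1, ?_⟩) <;>
    simpa [IsSumCut, Fin.forall_fin_two] using h

lemma isSumCut_of_castSucc [LT α] {f : Fin (n + 1) → α} (hk0 : 0 < k) (hkn : k ≤ n)
    (hcut : ∀ i j : Fin n, i < k → k ≤ j → f i.castSucc < f j.castSucc)
    (hlast : ∀ i : Fin n, i < k → f i.castSucc < f (Fin.last n)) : IsSumCut f k := by
  refine ⟨hk0, by lia, fun i j hi hj => ?_⟩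
  induction i using Fin.lastCases with
  | last => simp only [Fin.val_last] at hi; lia
  | cast i =>
    induction j using Fin.lastCases with
    | last => exact hlast i hi
    | cast j => exact hcut i j hi hj

variable [LinearOrder α]

lemma IsSumDecomposable.or_toDual_of_castSucc {f : Fin (n + 1) → α} (hf : f.Injective)
    (h3142 : Avoids3142 f) (hinit : IsSumDecomposable (f ∘ Fin.castSucc)) :
    IsSumDecomposable f ∨ IsSumDecomposable (toDual ∘ f) := by
  obtain ⟨k, hk0, hkn, hcut⟩ := hinit
  have hne (i : Fin n) : f i.castSucc ≠ f (Fin.last n) := hf.ne i.castSucc_ne_last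
  by_cases hprefix : ∀ i : Fin n, i < k → f i.castSucc < f (Fin.last n)
  · exact .inl ⟨k, isSumCut_of_castSucc hk0 hkn.le hcut hprefix⟩
  push Not at hprefix
  -- `m` is the first position of a value above the last one.
  obtain ⟨m, hmk, hm, hbefore⟩ : ∃ m : Fin n, m < k ∧ f (Fin.last n) < f m.castSucc ∧
      ∀ i < m, f i.castSucc < f (Fin.last n) := by
    obtain ⟨i, hik, hi⟩ := hprefix
    obtain ⟨m, hmi, hm⟩ := exists_minimal_le_of_wellFoundedLT
      (fun i : Fin n => f (Fin.last n) < f i.castSucc) i (hi.lt_of_ne (hne i).symm)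
    exact ⟨m, by lia, hm.prop, fun j hj => (hne j).lt_of_le (not_lt.1 (hm.not_prop_of_lt hj))⟩
  have hafter (j : Fin n) (hj : m ≤ j) : f (Fin.last n) < f j.castSucc := by
    obtain rfl | hmj := hj.eq_or_lt
    · exact hm
    by_cases hkj : k ≤ j
    · exact hm.trans (hcut m j hmk hkj)
    -- Otherwise the positions `m < j < k < n` carry the pattern `3142`.
    by_contra hjlast
    exact h3142 (b := j.castSucc) (c := (⟨k, hkn⟩ : Fin n).castSucc) hmj (not_le.1 hkj)
      (Fin.castSucc_lt_last _)
      ⟨(hne j).lt_of_le (not_lt.1 hjlast), hm, hcut m ⟨k, hkn⟩ hmk le_rfl⟩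
  rcases Nat.eq_zero_or_pos (m : ℕ) with hm0 | hm0
  · have hskew (i : Fin n) : f (Fin.last n) < f i.castSucc := hafter i (by lia)
    exact .inr ⟨n, isSumCut_of_castSucc (by lia) le_rfl (fun _ j _ hj => absurd j.2 hj.not_gt)
      fun i _ => hskew i⟩
  · exact .inl ⟨m, isSumCut_of_castSucc hm0 m.2.le
      (fun i j hi hj => (hbefore i hi).trans (hafter j hj)) hbefore⟩

lemma isSumDecomposable_or_toDual_of_avoids3142 {f : Fin n → α} (hn : 2 ≤ n) (hf : f.Injective)
    (h3142 : Avoids3142 f) (h2413 : Avoids3142 (toDual ∘ f)) :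
    IsSumDecomposable f ∨ IsSumDecomposable (toDual ∘ f) := by
  induction n, hn using Nat.le_induction with
  | base => exact isSumDecomposable_or_toDual_fin_two hf
  | succ n _ ih =>
    have hmono : StrictMono (Fin.castSucc : Fin n → Fin (n + 1)) := Fin.strictMono_castSucc
    rcases ih (hf.comp hmono.injective) (h3142.comp_strictMono hmono)
      (h2413.comp_strictMono hmono) with hsum | hskew
    · exact hsum.or_toDual_of_castSucc hf h3142
    · exact (hskew.or_toDual_of_castSucc (toDual.injective.comp hf) h2413).symm

end IsSumCut

/-! ### Complements and direct sums -/

section Compl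

variable {m n : ℕ}

/-- The complement of a permutation, which reverses the order of its values. -/
def compl (π : Perm n) : Perm n := Fin.revPerm * π

@[simp] lemma compl_apply (π : Perm n) (i : Fin n) : compl π i = (π i).rev := rfl

@[simp] lemma compl_compl (π : Perm n) : compl (compl π) = π := by
  ext i; simp

lemma contains_compl_compl_iff {σ : Perm m} {π : Perm n} :
    Contains (compl σ) (compl π) ↔ Contains σ π := by
  simp only [Contains, compl_apply, Fin.rev_lt_rev]
  exact exists_congr fun f => and_congr_right fun _ => forall_comm

lemma isSumDecomposable_compl_iff {π : Perm n} :
    IsSumDecomposable (compl π) ↔ IsSumDecomposable (toDual ∘ π) := by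
  simp only [IsSumDecomposable, IsSumCut, compl_apply, Fin.rev_lt_rev, Function.comp_apply,
    toDual_lt_toDual]

lemma avoids3142_compl_iff {π : Perm n} : Avoids3142 (compl π) ↔ Avoids3142 (toDual ∘ π) := by
  simp only [Avoids3142, compl_apply, Fin.rev_lt_rev, Function.comp_apply, toDual_lt_toDual]

end Compl

section DirectSum

variable {l m n : ℕ}

/-- The direct sum `σ ⊕ τ`: a copy of `σ` followed by a copy of `τ` with larger values. -/
def directSum (σ : Perm m) (τ : Perm n) : Perm (m + n) :=
  finSumFinEquiv.permCongr (Equiv.Perm.sumCongr σ τ)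

lemma directSum_injective :
    Function.Injective fun p : Perm m × Perm n => directSum p.1 p.2 :=
  finSumFinEquiv.permCongr.injective.comp Equiv.Perm.sumCongrHom_injective

lemma IsSumCut.exists_directSum {π : Perm (m + n)} (h : IsSumCut π m) :
    ∃ σ : Perm m, ∃ τ : Perm n, directSum σ τ = π := by
  have hlt (i : Fin m) : π (Fin.castAdd n i) < m := by
    have hcard : Fintype.card (Fin n) ≤ #(Ioi (π (Fin.castAdd n i))) :=
      card_le_card_of_injOn (fun j => π (Fin.natAdd m j))
        (fun j _ => by simpa using h.2.2 (Fin.castAdd n i) (Fin.natAdd m j) (by simp) (by simp))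
        (π.injective.comp (Fin.natAdd_injective n m)).injOn
    rw [Fintype.card_fin, Fin.card_Ioi] at hcard
    have := h.2.1
    lia
  obtain ⟨⟨σ, τ⟩, hστ⟩ : finSumFinEquiv.permCongr.symm π ∈
      (Equiv.Perm.sumCongrHom (Fin m) (Fin n)).range := by
    apply Equiv.Perm.mem_sumCongrHom_range_of_perm_mapsTo_inl
    rintro _ ⟨i, rfl⟩
    exact ⟨⟨_, hlt i⟩, finSumFinEquiv.injective (by simp)⟩
  exact ⟨σ, τ, (Equiv.eq_symm_apply _).1 hστ⟩

variable (σ : Perm m) (τ : Perm n)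

@[simp] lemma directSum_castAdd (i : Fin m) :
    directSum σ τ (Fin.castAdd n i) = Fin.castAdd n (σ i) := by
  simp [directSum, Equiv.permCongr_apply]

@[simp] lemma directSum_natAdd (i : Fin n) :
    directSum σ τ (Fin.natAdd m i) = Fin.natAdd m (τ i) := by
  simp [directSum, Equiv.permCongr_apply]

lemma directSum_castAdd_lt_castAdd_iff {i j : Fin m} :
    directSum σ τ (Fin.castAdd n i) < directSum σ τ (Fin.castAdd n j) ↔ σ i < σ j := by
  simp only [directSum_castAdd, (Fin.strictMono_castAdd n).lt_iff_lt]

lemma contains_directSum_left : Contains σ (directSum σ τ) :=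
  contains_of_strictMono (Fin.strictMono_castAdd n) (Fin.strictMono_castAdd n)
    (directSum_castAdd σ τ)

lemma contains_directSum_right : Contains τ (directSum σ τ) :=
  contains_of_strictMono (Fin.strictMono_natAdd m) (Fin.strictMono_natAdd m)
    (directSum_natAdd σ τ)

lemma directSum_lt_directSum {i j : Fin (m + n)} (hi : i < m) (hj : m ≤ j) :
    directSum σ τ i < directSum σ τ j := by
  obtain ⟨i, rfl⟩ : ∃ i', i = Fin.castAdd n i' := ⟨⟨i, hi⟩, rfl⟩
  obtain ⟨j, rfl⟩ : ∃ j', j = Fin.natAdd m j' := ⟨⟨j - m, by lia⟩, by ext; simp [hj]⟩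
  simp only [directSum_castAdd, directSum_natAdd, Fin.lt_def, Fin.val_castAdd, Fin.val_natAdd]
  lia

lemma isSumCut_directSum (hm : 0 < m) (hn : 0 < n) : IsSumCut (directSum σ τ) m :=
  ⟨hm, by lia, fun _ _ => directSum_lt_directSum σ τ⟩

lemma isSumCut_directSum_iff_of_lt {k : ℕ} (hk : k < m) :
    IsSumCut (directSum σ τ) k ↔ IsSumCut σ k := by
  refine and_congr_right fun _ => and_congr (by lia) ⟨fun h i j hi hj => ?_, fun h i j hi hj => ?_⟩
  · exact (directSum_castAdd_lt_castAdd_iff σ τ).1 (h (Fin.castAdd n i) (Fin.castAdd n j) hi hj)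
  · obtain hjm | hmj := lt_or_ge (j : ℕ) m
    · exact (directSum_castAdd_lt_castAdd_iff σ τ).2 (h ⟨i, hi.trans hk⟩ ⟨j, hjm⟩ hi hj)
    · exact directSum_lt_directSum σ τ (hi.trans hk) hmj

lemma isLeast_isSumCut_directSum_iff (hm : 0 < m) (hn : 0 < n) :
    IsLeast {k | IsSumCut (directSum σ τ) k} m ↔ ¬ IsSumDecomposable σ := by
  refine ⟨?_, fun hσ => ⟨isSumCut_directSum σ τ hm hn, fun k hk => ?_⟩⟩
  · rintro ⟨-, hmin⟩ ⟨k, hk⟩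
    exact hk.2.1.not_ge (hmin ((isSumCut_directSum_iff_of_lt σ τ hk.2.1).2 hk))
  · by_contra! hkm
    exact hσ ⟨k, (isSumCut_directSum_iff_of_lt σ τ hkm).1 hk⟩

variable {σ τ}

lemma contains_directSum_iff {ρ : Perm l} (hρ : ¬ IsSumDecomposable ρ) :
    Contains ρ (directSum σ τ) ↔ Contains ρ σ ∨ Contains ρ τ := by
  refine ⟨?_, fun h => h.elim (contains_trans · (contains_directSum_left σ τ))
    (contains_trans · (contains_directSum_right σ τ))⟩
  rintro ⟨f, hf, hfρ⟩
  by_cases hleft : ∀ s, f s < m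
  · choose g hg using fun s => (⟨⟨f s, hleft s⟩, rfl⟩ : ∃ i, f s = Fin.castAdd n i)
    exact .inl ⟨g, fun s t hst => by simpa [hg, (Fin.strictMono_castAdd n).lt_iff_lt] using hf hst,
      fun s t => by simpa only [hg, directSum_castAdd_lt_castAdd_iff] using hfρ s t⟩
  push Not at hleft
  -- An occurrence of `ρ` meeting both summands would cut `ρ` at its first entry `k` in `τ`.
  obtain ⟨k, hk⟩ := exists_minimal_of_wellFoundedLT (fun s => m ≤ f s) hleft
  have hk0 : (k : ℕ) = 0 := by
    by_contra hk0
    refine hρ ⟨k, by lia, k.2, fun s t hs ht => (hfρ s t).1 (directSum_lt_directSum σ τ ?_ ?_)⟩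
    · exact not_le.1 (hk.not_prop_of_lt hs)
    · exact hk.prop.trans (hf.monotone ht)
  have hright (s : Fin l) : m ≤ f s := hk.prop.trans (hf.monotone (by lia))
  choose g hg using fun s =>
    (⟨⟨f s - m, by have := hright s; lia⟩, by ext; simp [hright s]⟩ : ∃ j, f s = Fin.natAdd m j)
  exact .inr ⟨g, fun s t hst => by simpa [hg] using hf hst,
    fun s t => by simpa [hg] using hfρ s t⟩

end DirectSum

/-! ### Generating functions of sum-closed classes -/

section GenFun

variable {m n : ℕ}

/-- A class of permutations is sum-closed if it is closed under direct sums and under passing to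
their summands. -/
def IsSumClosed (S : ∀ n, Set (Perm n)) : Prop :=
  ∀ ⦃m n : ℕ⦄ (σ : Perm m) (τ : Perm n), directSum σ τ ∈ S (m + n) ↔ σ ∈ S m ∧ τ ∈ S n

/-- The subclass of the sum-decomposable permutations in `S`. -/
def sumDecomposables (S : ∀ n, Set (Perm n)) : ∀ n, Set (Perm n) := fun n =>
  {π ∈ S n | IsSumDecomposable π}

/-- The subclass of the permutations in `S` that are not sum-decomposable. This includes the empty
permutation, usually not called sum-indecomposable, but `genFun` ignores length zero. -/
def sumIndecomposables (S : ∀ n, Set (Perm n)) : ∀ n, Set (Perm n) := fun n =>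
  {π ∈ S n | ¬ IsSumDecomposable π}

variable (S : ∀ n, Set (Perm n))

lemma coeff_genFun (n : ℕ) :
    PowerSeries.coeff n (genFun S) = if n = 0 then 0 else ((S n).ncard : ℚ) :=
  PowerSeries.coeff_mk _ _

lemma sumDecomposables_eq_empty (hn : n < 2) : sumDecomposables S n = ∅ :=
  Set.eq_empty_of_forall_notMem fun _ hπ => hn.not_ge hπ.2.two_le

lemma coeff_genFun_sumDecomposables (n : ℕ) :
    PowerSeries.coeff n (genFun (sumDecomposables S)) = ((sumDecomposables S n).ncard : ℚ) := by
  rw [coeff_genFun, ite_eq_right_iff]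
  rintro rfl
  simp [sumDecomposables_eq_empty]

lemma genFun_sumDecomposables_add_genFun_sumIndecomposables :
    genFun (sumDecomposables S) + genFun (sumIndecomposables S) = genFun S := by
  ext n
  have hcard : (sumDecomposables S n).ncard + (sumIndecomposables S n).ncard = (S n).ncard := by
    rw [sumIndecomposables, ← Set.sdiff_sep_self, add_comm]
    exact Set.ncard_sdiff_add_ncard_of_subset (Set.sep_subset _ _)
  simp only [map_add, coeff_genFun]
  split_ifs
  · exact add_zero 0
  · exact_mod_cast hcard

lemma sumDecomposables_eq_biUnion (n : ℕ) : sumDecomposables S n =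
    ⋃ p ∈ antidiagonal n, {π ∈ S n | IsLeast {k | IsSumCut π k} p.1} := by
  classical
  ext π
  simp only [Set.mem_iUnion, exists_prop, HasAntidiagonal.mem_antidiagonal]
  constructor
  · rintro ⟨hπ, hdec⟩
    have hleast := Nat.isLeast_find hdec
    exact ⟨(Nat.find hdec, n - Nat.find hdec), Nat.add_sub_of_le hleast.1.2.1.le, hπ, hleast⟩
  · rintro ⟨p, -, hπ, hleast⟩
    exact ⟨hπ, p.1, hleast.1⟩

lemma ncard_sumDecomposables (n : ℕ) : (sumDecomposables S n).ncard =
    ∑ p ∈ antidiagonal n, {π ∈ S n | IsLeast {k | IsSumCut π k} p.1}.ncard := by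
  rw [sumDecomposables_eq_biUnion, ← finsum_mem_coe_finset]
  refine (finite_toSet _).ncard_biUnion (fun _ _ => Set.toFinite _) fun p hp q hq hpq => ?_
  refine Set.disjoint_left.2 fun π hπp hπq => hpq ?_
  exact (HasAntidiagonal.antidiagonal_congr hp hq).2 (hπp.2.unique hπq.2)

variable {S}

lemma ncard_setOf_isLeast_isSumCut (hS : IsSumClosed S) (hm : 0 < m) (hn : 0 < n) :
    {π ∈ S (m + n) | IsLeast {k | IsSumCut π k} m}.ncard =
      (sumIndecomposables S m).ncard * (S n).ncard := by
  rw [← Set.ncard_prod, ← Set.ncard_image_of_injective _ directSum_injective]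
  congr 1
  ext π
  constructor
  · rintro ⟨hπ, hleast⟩
    obtain ⟨σ, τ, rfl⟩ := hleast.1.exists_directSum
    obtain ⟨hσ, hτ⟩ := (hS σ τ).1 hπ
    exact ⟨(σ, τ), ⟨⟨hσ, (isLeast_isSumCut_directSum_iff σ τ hm hn).1 hleast⟩, hτ⟩, rfl⟩
  · rintro ⟨⟨σ, τ⟩, ⟨⟨hσ, hdec⟩, hτ⟩, rfl⟩
    exact ⟨(hS σ τ).2 ⟨hσ, hτ⟩, (isLeast_isSumCut_directSum_iff σ τ hm hn).2 hdec⟩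

theorem genFun_sumDecomposables (hS : IsSumClosed S) :
    genFun (sumDecomposables S) = genFun (sumIndecomposables S) * genFun S := by
  ext n
  rw [coeff_genFun_sumDecomposables, PowerSeries.coeff_mul, ncard_sumDecomposables, Nat.cast_sum]
  refine sum_congr rfl fun p hp => ?_
  obtain ⟨i, j⟩ := p
  obtain rfl : i + j = n := HasAntidiagonal.mem_antidiagonal.1 hp
  rw [coeff_genFun, coeff_genFun]
  by_cases hij : 0 < i ∧ 0 < j
  · rw [if_neg hij.1.ne', if_neg hij.2.ne', ncard_setOf_isLeast_isSumCut hS hij.1 hij.2,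
      Nat.cast_mul]
  · have hempty : {π ∈ S (i + j) | IsLeast {k | IsSumCut π k} i} = ∅ :=
      Set.eq_empty_of_forall_notMem fun π ⟨_, ⟨hi, hij', _⟩, _⟩ => hij ⟨hi, by lia⟩
    rw [hempty, Set.ncard_empty]
    have : i = 0 ∨ j = 0 := by lia
    rcases this with rfl | rfl <;> simp

end GenFun

/-! ### Separable permutations -/

section Separables

variable {n : ℕ} {π : Perm n}

lemma compl_p2413 : compl p2413 = p3142 := by decide

lemma compl_p3142 : compl p3142 = p2413 := by decide

lemma not_isSumDecomposable_p2413 : ¬ IsSumDecomposable p2413 := by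
  rintro ⟨k, hk0, hk4, hk⟩
  interval_cases k <;> revert hk <;> decide

lemma not_isSumDecomposable_p3142 : ¬ IsSumDecomposable p3142 := by
  rintro ⟨k, hk0, hk4, hk⟩
  interval_cases k <;> revert hk <;> decide

lemma contains_p3142_iff : Contains p3142 π ↔ ¬ Avoids3142 π := by
  simp only [Avoids3142, not_forall, not_not, contains_iff_exists_strictMono]
  constructor
  · rintro ⟨f, hf, hπ⟩
    exact ⟨f 0, f 1, f 2, f 3, hf (by decide), hf (by decide), hf (by decide),
      hπ (show 0 < 1 by decide), hπ (show 1 < 2 by decide), hπ (show 2 < 3 by decide)⟩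
  · rintro ⟨a, b, c, d, hab, hbc, hcd, hbd, hda, hac⟩
    refine ⟨![a, b, c, d], ?_, ?_⟩
    · simp [Fin.strictMono_iff_lt_succ, Fin.forall_fin_succ, *]
    · simp [Fin.strictMono_iff_lt_succ, Fin.forall_fin_succ, p3142, *]

lemma isSumClosed_separables : IsSumClosed Separables := fun σ τ => by
  simp only [Separables, Set.mem_ofPred_eq, contains_directSum_iff not_isSumDecomposable_p2413,
    contains_directSum_iff not_isSumDecomposable_p3142]
  tauto

lemma compl_mem_separables_iff : compl π ∈ Separables n ↔ π ∈ Separables n := by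
  have h2413 : Contains p2413 (compl π) ↔ Contains p3142 π := by
    rw [← compl_p3142, contains_compl_compl_iff]
  have h3142 : Contains p3142 (compl π) ↔ Contains p2413 π := by
    rw [← compl_p2413, contains_compl_compl_iff]
  simp only [Separables, Set.mem_ofPred_eq, h2413, h3142, and_comm]

lemma not_isSumDecomposable_iff_compl (hn : 2 ≤ n) (hπ : π ∈ Separables n) :
    ¬ IsSumDecomposable π ↔ IsSumDecomposable (compl π) := by
  rw [isSumDecomposable_compl_iff]
  have h3142 : Avoids3142 π := not_not.1 (contains_p3142_iff.not.1 hπ.2)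
  have h2413 : Avoids3142 (toDual ∘ π) :=
    avoids3142_compl_iff.1 (not_not.1 (contains_p3142_iff.not.1 (compl_mem_separables_iff.2 hπ).2))
  exact ⟨(isSumDecomposable_or_toDual_of_avoids3142 hn π.injective h3142 h2413).resolve_left,
    fun hskew hsum => hsum.not_toDual hskew⟩

lemma mem_separables_of_lt_four (hn : n < 4) : π ∈ Separables n :=
  ⟨fun h => hn.not_ge (le_of_contains h), fun h => hn.not_ge (le_of_contains h)⟩

lemma ncard_sumIndecomposables_separables (hn : 2 ≤ n) :
    (sumIndecomposables Separables n).ncard = (sumDecomposables Separables n).ncard := by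
  have himage : compl '' sumIndecomposables Separables n = sumDecomposables Separables n := by
    rw [Function.Involutive.image_eq_preimage_symm compl_compl]
    ext π
    refine (and_congr_right fun hπ => ?_).trans (and_congr_left fun _ => compl_mem_separables_iff)
    rw [not_isSumDecomposable_iff_compl hn hπ, compl_compl]
  rw [← himage, Set.ncard_image_of_injective _ (Function.Involutive.injective compl_compl)]

lemma ncard_sumIndecomposables_separables_one :
    (sumIndecomposables Separables 1).ncard = 1 := by
  have huniv : sumIndecomposables Separables 1 = Set.univ :=
    Set.eq_univ_of_forall fun _ =>
      ⟨mem_separables_of_lt_four (by decide), fun h => absurd h.two_le (by decide)⟩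
  rw [huniv, Set.ncard_univ, Nat.card_unique]

theorem genFun_sumIndecomposables_separables :
    genFun (sumIndecomposables Separables) =
      PowerSeries.X + genFun (sumDecomposables Separables) := by
  ext n
  rw [map_add, coeff_genFun, coeff_genFun_sumDecomposables, PowerSeries.coeff_X]
  obtain rfl | rfl | hn : n = 0 ∨ n = 1 ∨ 2 ≤ n := by lia
  · simp [sumDecomposables_eq_empty]
  · simp [sumDecomposables_eq_empty, ncard_sumIndecomposables_separables_one]
  · rw [if_neg (by lia), if_neg (by lia), ncard_sumIndecomposables_separables hn, zero_add]

end Separables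

end PermPattern

/-- The generating function `f` of the separable permutations satisfies
`f² + (x − 1)·f + x = 0`; equivalently, it counts the large Schröder numbers. -/
theorem statement18 :
    genFun Separables ^ 2 + (PowerSeries.X - 1) * genFun Separables +
      (PowerSeries.X : PowerSeries ℚ) = 0 := by
  have hadd := PermPattern.genFun_sumDecomposables_add_genFun_sumIndecomposables Separables
  have hdec := PermPattern.genFun_sumDecomposables PermPattern.isSumClosed_separables
  have hindec := PermPattern.genFun_sumIndecomposables_separables
  set f := genFun Separables
  linear_combination (1 - f) * hadd - (1 + f) * hindec - 2 * hdec
end
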